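/- arXiv:2409.06836 — 5 statements merged into one kernel-verified Lean document; each statement's English description precedes it below -/
import Mathlib

section
/- For every p ∈ [0,1] and every n ≥ 1, the finite sequence (Q(n,k))_{1≤k≤n} is unimodal: there exists a maximal index k_n ∈ {1,…,n} such that Q(n,k) ≥ Q(n,k−1) for all 1 ≤ k ≤ k_n and Q(n,k) ≤ Q(n,k−1) for all k_n < k ≤ n. Consequently, for each n the distribution of the position S_n of the elephant random walk (with first step +1) is unimodal on {2k − n : 1 ≤ k ≤ n}. -/
/-!
Put `a = 2p - 1` and `q = 1 - p`. With `c n = n - a` and `w n k = q n + a k` the recurrence reads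
`Q (n+1) (k+1) = (c n - w n k) * Q n (k+1) + w n k * Q n k`, and `0 ≤ w n k ≤ c n` for `k < n`.
So `Q (n+1) (k+1)` lies between `c n * Q n k` and `c n * Q n (k+1)`: up to the factor `c n`,
consecutive rows interlace. An interlacing row rises and falls where the previous one does,
except for one undecided increment next to the mode, so a mode `m` of row `n` yields a mode `m` or
`m + 1` of row `n + 1`.

Interlacing fails only at `k = n` and only if `c n < w n n`, that is `q n < a`. This inequality then
holds in all earlier rows, too, and there the last entry overshoots, `Q (n+1) (n+1) ≥ c n * Q n n`,
which keeps the mode of every row at its last entry.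
-/

section Mode

variable {R : Type*}

/-- `m` is a mode of the finite sequence `u 0, …, u n`: the sequence rises up to `m` and falls from
there on, as expressed by its consecutive terms. -/
structure IsModeUpTo [LE R] (u : ℕ → R) (n m : ℕ) : Prop where
  le_succ : ∀ k < m, u k ≤ u (k + 1)
  succ_le : ∀ k, m ≤ k → k < n → u (k + 1) ≤ u k

lemma isModeUpTo_or_isModeUpTo_succ [LinearOrder R] {u : ℕ → R} {n m : ℕ}
    (le_succ : ∀ k < m, u k ≤ u (k + 1)) (succ_le : ∀ k, m < k → k < n → u (k + 1) ≤ u k) :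
    IsModeUpTo u n m ∨ IsModeUpTo u n (m + 1) := by
  rcases le_total (u (m + 1)) (u m) with hfall | hrise
  · refine .inl ⟨le_succ, fun k hmk hkn ↦ ?_⟩
    rcases hmk.eq_or_lt with rfl | hmk
    exacts [hfall, succ_le k hmk hkn]
  · refine .inr ⟨fun k hkm ↦ ?_, succ_le⟩
    rcases (Nat.lt_succ_iff.1 hkm).eq_or_lt with rfl | hkm
    exacts [hrise, le_succ k hkm]

end Mode

/-- A triangular array `Q` with rows `n ≥ 1`, supported on `1 ≤ k ≤ n`, in which each entry of row
`n + 1` is `c n` times an average of the two entries above it, with weights proportional to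
`c n - w n k` and `w n k`. The weights are nonnegative except possibly `c n - w n n`, which
multiplies the zero entry `Q n (n + 1)`; if this exceptional weight is nonpositive in one row, so it
is in the row before. -/
structure IsAveragingTriangle {R : Type*} [CommRing R] [PartialOrder R]
    (c : ℕ → R) (w Q : ℕ → ℕ → R) : Prop where
  apex_nonneg : 0 ≤ Q 1 1
  left_eq_zero : ∀ n, 1 ≤ n → Q n 0 = 0
  right_eq_zero : ∀ n, 1 ≤ n → Q n (n + 1) = 0
  succ_eq : ∀ n, 1 ≤ n → ∀ k ≤ n,
    Q (n + 1) (k + 1) = (c n - w n k) * Q n (k + 1) + w n k * Q n k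
  weight_nonneg : ∀ n, ∀ k ≤ n, 0 ≤ w n k
  weight_le : ∀ n, ∀ k < n, w n k ≤ c n
  le_last_weight_of_succ : ∀ n, c (n + 1) ≤ w (n + 1) (n + 1) → c n ≤ w n n

namespace IsAveragingTriangle

section PartialOrder

variable {R : Type*} [CommRing R] [PartialOrder R] {c : ℕ → R} {w Q : ℕ → ℕ → R} {n k m : ℕ}

lemma succ_sub_mul_left (h : IsAveragingTriangle c w Q) (hn : 1 ≤ n) (hk : k ≤ n) :
    Q (n + 1) (k + 1) - c n * Q n k = (c n - w n k) * (Q n (k + 1) - Q n k) := by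
  rw [h.succ_eq n hn k hk]
  ring

lemma mul_right_sub_succ (h : IsAveragingTriangle c w Q) (hn : 1 ≤ n) (hk : k ≤ n) :
    c n * Q n (k + 1) - Q (n + 1) (k + 1) = w n k * (Q n (k + 1) - Q n k) := by
  rw [h.succ_eq n hn k hk]
  ring

variable [IsOrderedRing R]

lemma nonneg (h : IsAveragingTriangle c w Q) (hn : 1 ≤ n) (hk : k ≤ n + 1) : 0 ≤ Q n k := by
  induction n, hn using Nat.le_induction generalizing k with
  | base =>
    interval_cases k
    exacts [(h.left_eq_zero 1 le_rfl).ge, h.apex_nonneg, (h.right_eq_zero 1 le_rfl).ge]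
  | succ n hn ih =>
    rcases hk.eq_or_lt with rfl | hk
    · exact (h.right_eq_zero (n + 1) (by omega)).ge
    rcases k with _ | k
    · exact (h.left_eq_zero (n + 1) (by omega)).ge
    have hkn : k ≤ n := by omega
    have hleft : 0 ≤ w n k * Q n k := mul_nonneg (h.weight_nonneg n k hkn) (ih (by omega))
    have hright : 0 ≤ (c n - w n k) * Q n (k + 1) := by
      rcases hkn.eq_or_lt with rfl | hkn
      · rw [h.right_eq_zero k hn, mul_zero]
      · exact mul_nonneg (sub_nonneg.2 (h.weight_le n k hkn)) (ih (by omega))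
    rw [h.succ_eq n hn k hkn]
    exact add_nonneg hright hleft

lemma last_le (h : IsAveragingTriangle c w Q) (hn : 1 ≤ n) : Q n (n + 1) ≤ Q n n :=
  (h.right_eq_zero n hn).trans_le (h.nonneg hn n.le_succ)

lemma succ_le_mul_right (h : IsAveragingTriangle c w Q) (hn : 1 ≤ n) (hk : k ≤ n)
    (hrise : Q n k ≤ Q n (k + 1)) : Q (n + 1) (k + 1) ≤ c n * Q n (k + 1) := by
  rw [← sub_nonneg, h.mul_right_sub_succ hn hk]
  exact mul_nonneg (h.weight_nonneg n k hk) (sub_nonneg.2 hrise)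

lemma mul_left_le_succ (h : IsAveragingTriangle c w Q) (hn : 1 ≤ n) (hk : k < n)
    (hrise : Q n k ≤ Q n (k + 1)) : c n * Q n k ≤ Q (n + 1) (k + 1) := by
  rw [← sub_nonneg, h.succ_sub_mul_left hn hk.le]
  exact mul_nonneg (sub_nonneg.2 (h.weight_le n k hk)) (sub_nonneg.2 hrise)

lemma mul_right_le_succ (h : IsAveragingTriangle c w Q) (hn : 1 ≤ n) (hk : k ≤ n)
    (hfall : Q n (k + 1) ≤ Q n k) : c n * Q n (k + 1) ≤ Q (n + 1) (k + 1) := by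
  rw [← sub_nonpos, h.mul_right_sub_succ hn hk]
  exact mul_nonpos_of_nonneg_of_nonpos (h.weight_nonneg n k hk) (sub_nonpos.2 hfall)

lemma succ_le_mul_left (h : IsAveragingTriangle c w Q) (hn : 1 ≤ n) (hk : k ≤ n)
    (hw : w n k ≤ c n) (hfall : Q n (k + 1) ≤ Q n k) : Q (n + 1) (k + 1) ≤ c n * Q n k := by
  rw [← sub_nonpos, h.succ_sub_mul_left hn hk]
  exact mul_nonpos_of_nonneg_of_nonpos (sub_nonneg.2 hw) (sub_nonpos.2 hfall)

lemma mul_last_le_succ_last (h : IsAveragingTriangle c w Q) (hn : 1 ≤ n) (hw : c n ≤ w n n) :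
    c n * Q n n ≤ Q (n + 1) (n + 1) := by
  rw [← sub_nonneg, h.succ_sub_mul_left hn le_rfl]
  exact mul_nonneg_of_nonpos_of_nonpos (sub_nonpos.2 hw) (sub_nonpos.2 (h.last_le hn))

lemma succ_row_le_succ (h : IsAveragingTriangle c w Q) (hn : 1 ≤ n) (hmn : m ≤ n)
    (hm : IsModeUpTo (Q n) (n + 1) m) : ∀ k < m, Q (n + 1) k ≤ Q (n + 1) (k + 1) := by
  rintro (_ | k) hk
  · rw [h.left_eq_zero (n + 1) (by omega)]
    exact h.nonneg (by omega) (by omega)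
  · calc Q (n + 1) (k + 1)
      _ ≤ c n * Q n (k + 1) := h.succ_le_mul_right hn (by omega) (hm.le_succ k (by omega))
      _ ≤ Q (n + 1) (k + 2) := h.mul_left_le_succ hn (by omega) (hm.le_succ (k + 1) hk)

lemma succ_row_succ_le (h : IsAveragingTriangle c w Q) (hn : 1 ≤ n) (hw : w n n ≤ c n)
    (hm : IsModeUpTo (Q n) (n + 1) m) :
    ∀ k, m < k → k < n + 2 → Q (n + 1) (k + 1) ≤ Q (n + 1) k := by
  intro k hmk hkn
  obtain ⟨k, rfl⟩ := Nat.exists_eq_succ_of_ne_zero (Nat.ne_zero_of_lt hmk)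
  rcases (show k ≤ n by omega).eq_or_lt with rfl | hkn
  · exact h.last_le (by omega)
  have hw' : w n (k + 1) ≤ c n := by
    rcases (show k + 1 ≤ n from hkn).eq_or_lt with rfl | hkn
    exacts [hw, h.weight_le n (k + 1) hkn]
  calc Q (n + 1) (k + 2)
    _ ≤ c n * Q n (k + 1) :=
      h.succ_le_mul_left hn hkn hw' (hm.succ_le (k + 1) (by omega) (by omega))
    _ ≤ Q (n + 1) (k + 1) := h.mul_right_le_succ hn hkn.le (hm.succ_le k (by omega) (by omega))

lemma isModeUpTo_one (h : IsAveragingTriangle c w Q) : IsModeUpTo (Q 1) 2 1 where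
  le_succ k hk := by
    obtain rfl : k = 0 := by omega
    exact (h.left_eq_zero 1 le_rfl).trans_le h.apex_nonneg
  succ_le k hk hk' := by
    obtain rfl : k = 1 := by omega
    exact h.last_le le_rfl

lemma isModeUpTo_last_succ (h : IsAveragingTriangle c w Q) (hn : 1 ≤ n) (hw : c n ≤ w n n)
    (hm : IsModeUpTo (Q n) (n + 1) n) : IsModeUpTo (Q (n + 1)) (n + 2) (n + 1) where
  le_succ k hk := by
    rcases (Nat.lt_succ_iff.1 hk).eq_or_lt with rfl | hk
    · obtain ⟨k, rfl⟩ := Nat.exists_eq_succ_of_ne_zero (Nat.ne_zero_of_lt hn)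
      exact (h.succ_le_mul_right hn k.le_succ (hm.le_succ k k.lt_succ_self)).trans
        (h.mul_last_le_succ_last hn hw)
    · exact h.succ_row_le_succ hn le_rfl hm k hk
  succ_le k hk hk' := by
    obtain rfl : k = n + 1 := by omega
    exact h.last_le (by omega)

lemma isModeUpTo_last (h : IsAveragingTriangle c w Q) (hn : 1 ≤ n) (hw : c n ≤ w n n) :
    IsModeUpTo (Q n) (n + 1) n := by
  induction n, hn using Nat.le_induction with
  | base => exact h.isModeUpTo_one
  | succ n hn ih =>
    have hw' := h.le_last_weight_of_succ n hw
    exact h.isModeUpTo_last_succ hn hw' (ih hw')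

end PartialOrder

theorem exists_isModeUpTo {R : Type*} [CommRing R] [LinearOrder R] [IsOrderedRing R]
    {c : ℕ → R} {w Q : ℕ → ℕ → R} {n : ℕ} (h : IsAveragingTriangle c w Q) (hn : 1 ≤ n) :
    ∃ m, 1 ≤ m ∧ m ≤ n ∧ IsModeUpTo (Q n) (n + 1) m := by
  induction n, hn using Nat.le_induction with
  | base => exact ⟨1, le_rfl, le_rfl, h.isModeUpTo_one⟩
  | succ n hn ih =>
    rcases le_total (c n) (w n n) with hw | hw
    · exact ⟨n + 1, by omega, le_rfl, h.isModeUpTo_last_succ hn hw (h.isModeUpTo_last hn hw)⟩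
    · obtain ⟨m, hm1, hmn, hm⟩ := ih
      rcases isModeUpTo_or_isModeUpTo_succ (h.succ_row_le_succ hn hmn hm)
        (h.succ_row_succ_le hn hw hm) with hm' | hm'
      exacts [⟨m, hm1, by omega, hm'⟩, ⟨m + 1, by omega, by omega, hm'⟩]

end IsAveragingTriangle

section ElephantRandomWalk

variable {R : Type*} [CommRing R] [PartialOrder R] [IsOrderedRing R] {p : R}

lemma erw_weight_nonneg (hp : p ∈ Set.Icc 0 1) {n k : ℕ} (hk : k ≤ n) :
    0 ≤ (1 - p) * n + (2 * p - 1) * (k : R) := by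
  have hk' : (0 : R) ≤ n - k := sub_nonneg.2 (Nat.mono_cast hk)
  calc (0 : R)
    _ ≤ (1 - p) * (n - k) + p * k :=
      add_nonneg (mul_nonneg (sub_nonneg.2 hp.2) hk') (mul_nonneg hp.1 k.cast_nonneg)
    _ = (1 - p) * n + (2 * p - 1) * k := by ring

lemma erw_weight_le (hp : p ∈ Set.Icc 0 1) {n k : ℕ} (hk : k < n) :
    (1 - p) * n + (2 * p - 1) * (k : R) ≤ n - (2 * p - 1) := by
  have hk' : (0 : R) ≤ n - (k + 1 : ℕ) := sub_nonneg.2 (Nat.mono_cast hk)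
  rw [← sub_nonneg]
  calc (0 : R)
    _ ≤ p * (n - (k + 1 : ℕ)) + (1 - p) * (k + 1 : ℕ) :=
      add_nonneg (mul_nonneg hp.1 hk') (mul_nonneg (sub_nonneg.2 hp.2) (k + 1).cast_nonneg)
    _ = n - (2 * p - 1) - ((1 - p) * n + (2 * p - 1) * k) := by push_cast; ring

theorem erw_isAveragingTriangle (hp : p ∈ Set.Icc 0 1) {Q : ℕ → ℕ → R} (hQ11 : 0 ≤ Q 1 1)
    (hQzero : ∀ n : ℕ, 1 ≤ n → Q n 0 = 0) (hQtop : ∀ n : ℕ, 1 ≤ n → Q n (n + 1) = 0)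
    (hQrec : ∀ n : ℕ, 1 ≤ n → ∀ k : ℕ, 1 ≤ k → k ≤ n + 1 →
      Q (n + 1) k = ((n : R) * p - (2 * p - 1) * k) * Q n k
        + ((1 - p) * n + (2 * p - 1) * ((k : R) - 1)) * Q n (k - 1)) :
    IsAveragingTriangle (fun n ↦ n - (2 * p - 1)) (fun n k ↦ (1 - p) * n + (2 * p - 1) * k) Q where
  apex_nonneg := hQ11
  left_eq_zero := hQzero
  right_eq_zero := hQtop
  succ_eq n hn k hk := by
    rw [hQrec n hn (k + 1) (by omega) (by omega), Nat.add_sub_cancel]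
    push_cast
    ring
  weight_nonneg _ _ hk := erw_weight_nonneg hp hk
  weight_le _ _ hk := erw_weight_le hp hk
  le_last_weight_of_succ n hw := by
    rw [← sub_nonneg] at hw ⊢
    refine (add_nonneg hw (sub_nonneg.2 hp.2)).trans_eq ?_
    push_cast
    ring

end ElephantRandomWalk

theorem erw_Q_unimodal_general {R : Type*} [CommRing R] [LinearOrder R] [IsOrderedRing R]
    {c : ℕ → R} {w Q : ℕ → ℕ → R} (h : IsAveragingTriangle c w Q) (n : ℕ) (hn : 1 ≤ n) :
    ∃ kn : ℕ, 1 ≤ kn ∧ kn ≤ n ∧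
      (∀ k : ℕ, 1 ≤ k → k ≤ kn → Q n (k - 1) ≤ Q n k) ∧
      (∀ k : ℕ, kn < k → k ≤ n → Q n k ≤ Q n (k - 1)) := by
  obtain ⟨m, hm1, hmn, hm⟩ := h.exists_isModeUpTo hn
  refine ⟨m, hm1, hmn, fun k hk hkm ↦ ?_, fun k hmk hkn ↦ ?_⟩
  · simpa only [Nat.sub_add_cancel hk] using hm.le_succ (k - 1) (by omega)
  · simpa only [Nat.sub_add_cancel (hm1.trans hmk.le)] using
      hm.succ_le (k - 1) (by omega) (by omega)

/-- Unimodality of the triangular array `Q` associated with the elephant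
random walk with memory parameter `p` and first step `+1`. -/
theorem erw_Q_unimodal (p : ℝ) (hp : p ∈ Set.Icc (0 : ℝ) 1)
    (Q : ℕ → ℕ → ℝ)
    (hQ11 : Q 1 1 = 1)
    (hQzero : ∀ n : ℕ, 1 ≤ n → Q n 0 = 0)
    (hQtop : ∀ n : ℕ, 1 ≤ n → Q n (n + 1) = 0)
    (hQrec : ∀ n : ℕ, 1 ≤ n → ∀ k : ℕ, 1 ≤ k → k ≤ n + 1 →
      Q (n + 1) k = ((n : ℝ) * p - (2 * p - 1) * k) * Q n k
        + ((1 - p) * n + (2 * p - 1) * ((k : ℝ) - 1)) * Q n (k - 1))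
    (n : ℕ) (hn : 1 ≤ n) :
    ∃ kn : ℕ, 1 ≤ kn ∧ kn ≤ n ∧
      (∀ k : ℕ, 1 ≤ k → k ≤ kn → Q n (k - 1) ≤ Q n k) ∧
      (∀ k : ℕ, kn < k → k ≤ n → Q n k ≤ Q n (k - 1)) :=
  have hQ11_nonneg : 0 ≤ Q 1 1 := hQ11 ▸ zero_le_one
  erw_Q_unimodal_general (erw_isAveragingTriangle hp hQ11_nonneg hQzero hQtop hQrec) n hn
end

section
/- For every a ∈ (1/2, 1), the function u ↦ (1 − (1+u²)^{−1/2}) u^{−1−1/a} is integrable on (0,∞) and (1/a) ∫_0^∞ (1 − 1/√(1+u²)) u^{−1−1/a} du = (1/2) B(1/2 + 1/(2a), 1 − 1/(2a)) = ρ_a^{1/a}, where B(·,·) is the Beta function. -/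
open MeasureTheory

/-- The exponential growth rate `ρ_a`. -/
noncomputable def rhoERW (a : ℝ) : ℝ :=
  ((1 / Real.sqrt Real.pi) * Real.Gamma (1/2 + 1/(2*a)) * Real.Gamma (1 - 1/(2*a))) ^ a

/-!
In the variable `t = u²` and with `q = 1 / (2a)`, the integral is the case `r = 1/2` of
`q ∫₀^∞ (1 - (1 + t)^(-r)) t^(-1 - q) dt = r B(r + q, 1 - q)`, for `r ≥ 0` and `0 < q < 1`.
Integration by parts against `-t^(-q)` proves this: the boundary terms vanish because
`1 - (1 + t)^(-r)` is at most `r t` and at most `1`, and what remains is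
`r ∫₀^∞ t^(-q) (1 + t)^(-r - 1) dt`, which `w = 1 / (1 + t)` turns into a Beta integral over
`(0, 1)`. For `r = 1/2` the value is `ρ_a ^ (1/a)` because the denominator of the Beta function is
`Γ(3/2) = √π / 2`.
-/

open Set Filter Topology ProbabilityTheory

section BetaIntegral

variable {α β : ℝ}

lemma integral_Ioo_rpow_mul_one_sub_rpow (hα : 0 < α) (hβ : 0 < β) :
    ∫ x in Ioo (0 : ℝ) 1, x ^ (α - 1) * (1 - x) ^ (β - 1) = beta α β := by
  have integrand_ofReal : ∀ x ∈ Ioc (0 : ℝ) 1,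
      (x : ℂ) ^ ((α : ℂ) - 1) * (1 - x : ℂ) ^ ((β : ℂ) - 1)
        = ((x ^ (α - 1) * (1 - x) ^ (β - 1) : ℝ) : ℂ) := by
    intro x hx
    rw [Complex.ofReal_mul, Complex.ofReal_cpow hx.1.le, Complex.ofReal_cpow (sub_nonneg.2 hx.2)]
    push_cast
    rfl
  rw [beta_eq_betaIntegralReal α β hα hβ, Complex.betaIntegral,
    intervalIntegral.integral_of_le zero_le_one,
    setIntegral_congr_fun measurableSet_Ioc integrand_ofReal, integral_complex_ofReal,
    Complex.ofReal_re, integral_Ioc_eq_integral_Ioo]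

lemma strictAntiOn_inv_one_add : StrictAntiOn (fun t : ℝ => (1 + t)⁻¹) (Ioi (-1)) :=
  fun _ hs _ _ hst => inv_strictAnti₀ (neg_lt_iff_pos_add'.1 hs) (add_lt_add_right hst 1)

lemma image_inv_one_add_Ioi : (fun t : ℝ => (1 + t)⁻¹) '' Ioi 0 = Ioo 0 1 := by
  ext w
  constructor
  · rintro ⟨t, ht, rfl⟩
    rw [mem_Ioi] at ht
    exact ⟨by positivity, inv_lt_one_of_one_lt₀ (by linarith)⟩
  · rintro ⟨hw0, hw1⟩
    exact ⟨w⁻¹ - 1, sub_pos.2 ((one_lt_inv₀ hw0).2 hw1), by simp⟩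

lemma hasDerivAt_inv_one_add {t : ℝ} (ht : 1 + t ≠ 0) :
    HasDerivAt (fun t : ℝ => (1 + t)⁻¹) (-1 / (1 + t) ^ 2) t :=
  ((hasDerivAt_id t).const_add 1).inv ht

lemma beta_integrand_inv_one_add {t : ℝ} (ht : 0 < t) :
    -(-1 / (1 + t) ^ 2) • ((1 + t)⁻¹ ^ (α - 1) * (1 - (1 + t)⁻¹) ^ (β - 1))
      = t ^ (β - 1) * (1 + t) ^ (-(α + β)) := by
  have hs : 0 < 1 + t := by positivity
  have one_sub_inv : 1 - (1 + t)⁻¹ = t * (1 + t)⁻¹ := by field_simp; ring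
  have jacobian : -(-1 / (1 + t) ^ 2) = (1 + t) ^ (-2 : ℝ) := by
    rw [Real.rpow_neg hs.le, Real.rpow_two, neg_div, neg_neg, one_div]
  rw [one_sub_inv, jacobian, smul_eq_mul, Real.mul_rpow ht.le (by positivity),
    Real.inv_rpow hs.le, Real.inv_rpow hs.le, ← Real.rpow_neg hs.le, ← Real.rpow_neg hs.le]
  calc (1 + t) ^ (-2 : ℝ) * ((1 + t) ^ (-(α - 1)) * (t ^ (β - 1) * (1 + t) ^ (-(β - 1))))
      = t ^ (β - 1) * ((1 + t) ^ (-2 : ℝ) * (1 + t) ^ (-(α - 1)) * (1 + t) ^ (-(β - 1))) := by ring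
    _ = t ^ (β - 1) * (1 + t) ^ (-(α + β)) := by
      rw [← Real.rpow_add hs, ← Real.rpow_add hs]
      ring_nf

lemma integral_Ioi_rpow_mul_one_add_rpow_neg (hα : 0 < α) (hβ : 0 < β) :
    ∫ t in Ioi (0 : ℝ), t ^ (β - 1) * (1 + t) ^ (-(α + β)) = beta α β := by
  rw [← integral_Ioo_rpow_mul_one_sub_rpow hα hβ, ← image_inv_one_add_Ioi,
    integral_image_eq_integral_deriv_smul_of_antitoneOn measurableSet_Ioi
      (fun t ht => (hasDerivAt_inv_one_add (add_pos one_pos ht).ne').hasDerivWithinAt)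
      (strictAntiOn_inv_one_add.antitoneOn.mono (Ioi_subset_Ioi (by norm_num)))]
  exact setIntegral_congr_fun measurableSet_Ioi fun t ht => (beta_integrand_inv_one_add ht).symm

lemma integrableOn_Ioi_rpow_mul_one_add_rpow_neg (hα : 0 < α) (hβ : 0 < β) :
    IntegrableOn (fun t : ℝ => t ^ (β - 1) * (1 + t) ^ (-(α + β))) (Ioi 0) :=
  Integrable.of_integral_ne_zero <|
    (integral_Ioi_rpow_mul_one_add_rpow_neg hα hβ).trans_ne (beta_pos hα hβ).ne'

end BetaIntegral

section OneSubRpow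

variable {r t : ℝ}

lemma one_sub_one_add_rpow_neg_nonneg (hr : 0 ≤ r) (ht : 0 ≤ t) : 0 ≤ 1 - (1 + t) ^ (-r) :=
  sub_nonneg.2 (Real.rpow_le_one_of_one_le_of_nonpos (by linarith) (neg_nonpos.2 hr))

lemma one_sub_one_add_rpow_neg_le_one (ht : -1 ≤ t) : 1 - (1 + t) ^ (-r) ≤ 1 :=
  sub_le_self 1 (Real.rpow_nonneg (by linarith) _)

lemma one_sub_one_add_rpow_neg_le_mul (hr : 0 ≤ r) (ht : -1 < t) :
    1 - (1 + t) ^ (-r) ≤ r * t := by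
  have hs : 0 < 1 + t := by linarith
  have log_le : Real.log (1 + t) ≤ t := by linarith [Real.log_le_sub_one_of_pos hs]
  calc 1 - (1 + t) ^ (-r) = 1 - Real.exp (Real.log (1 + t) * -r) := by rw [Real.rpow_def_of_pos hs]
    _ ≤ r * Real.log (1 + t) := by linarith [Real.add_one_le_exp (Real.log (1 + t) * -r)]
    _ ≤ r * t := by gcongr

lemma hasDerivAt_one_sub_one_add_rpow_neg (ht : 1 + t ≠ 0) :
    HasDerivAt (fun t : ℝ => 1 - (1 + t) ^ (-r)) (r * (1 + t) ^ (-r - 1)) t := by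
  refine ((((hasDerivAt_id t).const_add 1).rpow_const (Or.inl ht)).const_sub 1).congr_deriv ?_
  simp

variable {s : ℝ}

lemma norm_one_sub_one_add_rpow_neg_mul_rpow_le_rpow (hr : 0 ≤ r) (ht : 0 < t) :
    ‖(1 - (1 + t) ^ (-r)) * t ^ s‖ ≤ t ^ s := by
  rw [Real.norm_of_nonneg
    (mul_nonneg (one_sub_one_add_rpow_neg_nonneg hr ht.le) (Real.rpow_nonneg ht.le s))]
  exact mul_le_of_le_one_left (Real.rpow_nonneg ht.le s)
    (one_sub_one_add_rpow_neg_le_one (by linarith))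

lemma norm_one_sub_one_add_rpow_neg_mul_rpow_le_mul_rpow (hr : 0 ≤ r) (ht : 0 < t) :
    ‖(1 - (1 + t) ^ (-r)) * t ^ s‖ ≤ r * t ^ (s + 1) := by
  rw [Real.norm_of_nonneg
    (mul_nonneg (one_sub_one_add_rpow_neg_nonneg hr ht.le) (Real.rpow_nonneg ht.le s))]
  calc (1 - (1 + t) ^ (-r)) * t ^ s ≤ r * t * t ^ s := by
        gcongr
        exact one_sub_one_add_rpow_neg_le_mul hr (by linarith)
    _ = r * t ^ (s + 1) := by rw [Real.rpow_add_one ht.ne']; ring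

lemma tendsto_one_sub_one_add_rpow_neg_mul_rpow_nhdsGT_zero (hr : 0 ≤ r) (hs : -1 < s) :
    Tendsto (fun t : ℝ => (1 - (1 + t) ^ (-r)) * t ^ s) (𝓝[>] 0) (𝓝 0) := by
  have hs1 : 0 < s + 1 := by linarith
  have majorant : Tendsto (fun t : ℝ => r * t ^ (s + 1)) (𝓝[>] 0) (𝓝 0) := by
    have h := ((Real.continuous_rpow_const hs1.le).const_mul r).tendsto 0
    rw [Real.zero_rpow hs1.ne', mul_zero] at h
    exact h.mono_left nhdsWithin_le_nhds
  refine squeeze_zero_norm' ?_ majorant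
  filter_upwards [self_mem_nhdsWithin] with t ht
  exact norm_one_sub_one_add_rpow_neg_mul_rpow_le_mul_rpow hr ht

lemma tendsto_one_sub_one_add_rpow_neg_mul_rpow_atTop (hr : 0 ≤ r) (hs : s < 0) :
    Tendsto (fun t : ℝ => (1 - (1 + t) ^ (-r)) * t ^ s) atTop (𝓝 0) := by
  have majorant : Tendsto (fun t : ℝ => t ^ s) atTop (𝓝 0) := by
    simpa only [neg_neg] using tendsto_rpow_neg_atTop (neg_pos.2 hs)
  refine squeeze_zero_norm' ?_ majorant
  filter_upwards [eventually_gt_atTop 0] with t ht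
  exact norm_one_sub_one_add_rpow_neg_mul_rpow_le_rpow hr ht

lemma integrableOn_Ioi_one_sub_one_add_rpow_neg_mul_rpow (hr : 0 ≤ r) (hs : s ∈ Ioo (-2) (-1)) :
    IntegrableOn (fun t : ℝ => (1 - (1 + t) ^ (-r)) * t ^ s) (Ioi 0) := by
  have measurable_integrand : Measurable fun t : ℝ => (1 - (1 + t) ^ (-r)) * t ^ s := by fun_prop
  rw [← Ioc_union_Ioi_eq_Ioi zero_le_one]
  refine IntegrableOn.union ?_ ?_
  · have majorant : IntegrableOn (fun t : ℝ => r * t ^ (s + 1)) (Ioc 0 1) :=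
      ((intervalIntegrable_iff_integrableOn_Ioc_of_le zero_le_one).1
        (intervalIntegral.intervalIntegrable_rpow' (by linarith [hs.1]))).const_mul r
    exact majorant.mono' measurable_integrand.aestronglyMeasurable <|
      ae_restrict_of_forall_mem measurableSet_Ioc fun t ht =>
        norm_one_sub_one_add_rpow_neg_mul_rpow_le_mul_rpow hr ht.1
  · exact (integrableOn_Ioi_rpow_of_lt hs.2 one_pos).mono'
      measurable_integrand.aestronglyMeasurable <|
      ae_restrict_of_forall_mem measurableSet_Ioi fun t ht =>
        norm_one_sub_one_add_rpow_neg_mul_rpow_le_rpow hr (one_pos.trans ht)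

end OneSubRpow

lemma hasDerivAt_neg_rpow_neg (q : ℝ) {t : ℝ} (ht : t ≠ 0) :
    HasDerivAt (fun t : ℝ => -t ^ (-q)) (q * t ^ (-1 - q)) t := by
  refine (Real.hasDerivAt_rpow_const (Or.inl ht)).neg.congr_deriv ?_
  rw [neg_mul, neg_neg, neg_sub_left, neg_add']

lemma mul_integral_Ioi_one_sub_one_add_rpow_neg_mul_rpow {q r : ℝ} (hr : 0 ≤ r)
    (hq : q ∈ Ioo 0 1) :
    q * ∫ t in Ioi (0 : ℝ), (1 - (1 + t) ^ (-r)) * t ^ (-1 - q) = r * beta (r + q) (1 - q) := by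
  obtain ⟨hq0, hq1⟩ := hq
  have hα : 0 < r + q := by linarith
  have hβ : 0 < 1 - q := by linarith
  have deriv_mul_eq : (fun t : ℝ => r * (1 + t) ^ (-r - 1) * -t ^ (-q))
      = fun t => -(r * (t ^ (1 - q - 1) * (1 + t) ^ (-(r + q + (1 - q))))) := by
    ext t
    ring_nf
  have by_parts := integral_Ioi_mul_deriv_eq_deriv_mul (a' := 0) (b' := 0)
    (fun t (ht : 0 < t) => hasDerivAt_one_sub_one_add_rpow_neg (r := r) (by positivity))
    (fun t (ht : 0 < t) => hasDerivAt_neg_rpow_neg q ht.ne') ?_ ?_ ?_ ?_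
  · simp only [deriv_mul_eq, mul_left_comm _ q, integral_neg, integral_const_mul,
      integral_Ioi_rpow_mul_one_add_rpow_neg hα hβ] at by_parts
    simpa using by_parts
  · simp only [Pi.mul_def, mul_left_comm _ q]
    exact (integrableOn_Ioi_one_sub_one_add_rpow_neg_mul_rpow hr
      ⟨by linarith, by linarith⟩).const_mul q
  · rw [Pi.mul_def, deriv_mul_eq]
    exact ((integrableOn_Ioi_rpow_mul_one_add_rpow_neg hα hβ).const_mul r).neg
  · simpa only [Pi.mul_def, mul_neg, neg_zero] using
      (tendsto_one_sub_one_add_rpow_neg_mul_rpow_nhdsGT_zero hr (neg_lt_neg hq1)).neg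
  · simpa only [Pi.mul_def, mul_neg, neg_zero] using
      (tendsto_one_sub_one_add_rpow_neg_mul_rpow_atTop hr (neg_lt_zero.2 hq0)).neg

section SquareSubstitution

variable {p r : ℝ}

lemma rpow_smul_one_sub_one_add_sq_rpow_neg_mul {u : ℝ} (hu : 0 < u) :
    u ^ ((2 : ℝ) - 1) • ((1 - (1 + u ^ (2 : ℝ)) ^ (-r)) * (u ^ (2 : ℝ)) ^ (-1 - p / 2))
      = (1 - (1 + u ^ 2) ^ (-r)) * u ^ (-1 - p) := by
  rw [smul_eq_mul, mul_left_comm, ← Real.rpow_mul hu.le, ← Real.rpow_add hu, Real.rpow_two]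
  ring_nf

lemma integrableOn_Ioi_one_sub_one_add_sq_rpow_neg_mul_rpow (hr : 0 ≤ r) (hp : p ∈ Ioo 0 2) :
    IntegrableOn (fun u : ℝ => (1 - (1 + u ^ 2) ^ (-r)) * u ^ (-1 - p)) (Ioi 0) := by
  have integrableOn_half := integrableOn_Ioi_one_sub_one_add_rpow_neg_mul_rpow hr
    (s := -1 - p / 2) ⟨by linarith [hp.2], by linarith [hp.1]⟩
  exact ((integrableOn_Ioi_comp_rpow_iff' _ two_ne_zero).2 integrableOn_half).congr_fun
    (fun u hu => rpow_smul_one_sub_one_add_sq_rpow_neg_mul hu) measurableSet_Ioi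

lemma mul_integral_Ioi_one_sub_one_add_sq_rpow_neg_mul_rpow (hr : 0 ≤ r) (hp : p ∈ Ioo 0 2) :
    p * ∫ u in Ioi (0 : ℝ), (1 - (1 + u ^ 2) ^ (-r)) * u ^ (-1 - p)
      = r * beta (r + p / 2) (1 - p / 2) := by
  have two_mul_integral : 2 * ∫ u in Ioi (0 : ℝ), (1 - (1 + u ^ 2) ^ (-r)) * u ^ (-1 - p)
      = ∫ t in Ioi (0 : ℝ), (1 - (1 + t) ^ (-r)) * t ^ (-1 - p / 2) := by
    rw [← integral_comp_rpow_Ioi_of_pos (g := fun t => (1 - (1 + t) ^ (-r)) * t ^ (-1 - p / 2))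
        two_pos, ← integral_const_mul]
    refine setIntegral_congr_fun measurableSet_Ioi fun u hu => ?_
    rw [mul_smul, rpow_smul_one_sub_one_add_sq_rpow_neg_mul hu, smul_eq_mul]
  rw [← mul_integral_Ioi_one_sub_one_add_rpow_neg_mul_rpow hr
      ⟨by linarith [hp.1], by linarith [hp.2]⟩, ← two_mul_integral]
  ring

end SquareSubstitution

lemma one_div_sqrt_eq_rpow_neg_half {x : ℝ} (hx : 0 ≤ x) : 1 / √x = x ^ (-(1 / 2) : ℝ) := by
  rw [Real.rpow_neg hx, ← Real.sqrt_eq_rpow, one_div]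

lemma half_mul_beta_half_add_one_sub (q : ℝ) :
    1 / 2 * beta (1 / 2 + q) (1 - q)
      = 1 / √Real.pi * Real.Gamma (1 / 2 + q) * Real.Gamma (1 - q) := by
  have Gamma_three_half : Real.Gamma (1 / 2 + q + (1 - q)) = 1 / 2 * √Real.pi := by
    rw [add_add_sub_cancel, Real.Gamma_add_one (by norm_num), Real.Gamma_one_half_eq]
  rw [beta, Gamma_three_half]
  field_simp

lemma rhoERW_rpow_one_div {a : ℝ} (ha : 1 / 2 < a) :
    rhoERW a ^ (1 / a) = 1 / 2 * beta (1 / 2 + 1 / (2 * a)) (1 - 1 / (2 * a)) := by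
  have ha0 : 0 < a := by linarith
  have hα : 0 < 1 / 2 + 1 / (2 * a) := by positivity
  have hβ : 0 < 1 - 1 / (2 * a) := sub_pos.2 ((div_lt_one (by positivity)).2 (by linarith))
  have base_nonneg := (mul_pos one_half_pos (beta_pos hα hβ)).le
  rw [half_mul_beta_half_add_one_sub] at base_nonneg ⊢
  rw [rhoERW, ← Real.rpow_mul base_nonneg, mul_one_div_cancel ha0.ne', Real.rpow_one]

theorem erw_rho_integral_identity_general (a : ℝ) (ha : 1 / 2 < a) :
    IntegrableOn (fun u : ℝ => (1 - 1 / √(1 + u ^ 2)) * u ^ (-1 - 1 / a)) (Ioi 0) ∧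
    1 / a * ∫ u in Ioi (0 : ℝ), (1 - 1 / √(1 + u ^ 2)) * u ^ (-1 - 1 / a)
      = 1 / 2 * beta (1 / 2 + 1 / (2 * a)) (1 - 1 / (2 * a)) ∧
    1 / 2 * beta (1 / 2 + 1 / (2 * a)) (1 - 1 / (2 * a)) = rhoERW a ^ (1 / a) := by
  have ha0 : 0 < a := by linarith
  have hp : 1 / a ∈ Ioo 0 2 := ⟨by positivity, (div_lt_iff₀ ha0).2 (by linarith)⟩
  have one_div_two_mul : 1 / (2 * a) = 1 / a / 2 := by field_simp
  have sqrt_eq (u : ℝ) : 1 / √(1 + u ^ 2) = (1 + u ^ 2) ^ (-(1 / 2) : ℝ) :=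
    one_div_sqrt_eq_rpow_neg_half (by positivity)
  refine ⟨?_, ?_, (rhoERW_rpow_one_div ha).symm⟩
  · simpa only [sqrt_eq] using
      integrableOn_Ioi_one_sub_one_add_sq_rpow_neg_mul_rpow one_half_pos.le hp
  · simpa only [sqrt_eq, one_div_two_mul] using
      mul_integral_Ioi_one_sub_one_add_sq_rpow_neg_mul_rpow one_half_pos.le hp

/-- the integral identity
`(1/a) ∫₀^∞ (1 − 1/√(1+u²)) u^{−1−1/a} du = B(1/2 + 1/(2a), 1 − 1/(2a))/2 = ρ_a^{1/a}`. -/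
theorem erw_rho_integral_identity (a : ℝ) (ha : a ∈ Set.Ioo (1/2 : ℝ) 1) :
    IntegrableOn (fun u : ℝ => (1 - 1 / Real.sqrt (1 + u^2)) * u ^ (-1 - 1/a))
      (Set.Ioi 0) ∧
    (1/a) * ∫ u in Set.Ioi (0 : ℝ), (1 - 1 / Real.sqrt (1 + u^2)) * u ^ (-1 - 1/a)
      = (1/2) * (Real.Gamma (1/2 + 1/(2*a)) * Real.Gamma (1 - 1/(2*a))
          / Real.Gamma ((1/2 + 1/(2*a)) + (1 - 1/(2*a)))) ∧
    (1/2) * (Real.Gamma (1/2 + 1/(2*a)) * Real.Gamma (1 - 1/(2*a))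
        / Real.Gamma ((1/2 + 1/(2*a)) + (1 - 1/(2*a))))
      = rhoERW a ^ (1/a) := by
  exact erw_rho_integral_identity_general a ha.1
end

section
/- For every real z > 1, the series ∑_{n≥0} (−1)^n (1/2)_n z^{−2n} / ((1 + a + 2an) n!) converges absolutely and F(z) = z^{−(1+1/a)} ∑_{n≥0} (−1)^n (1/2)_n z^{−2n} / ((1 + a + 2an) n!), where (x)_n = x(x+1)⋯(x+n−1) denotes the Pochhammer symbol with (x)_0 = 1. -/
open MeasureTheory

/-- The function `F(x) = (1/a) ∫_x^∞ du / (u^{1+1/a} √(1+u²))`. -/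
noncomputable def FERW (a : ℝ) (x : ℝ) : ℝ :=
  (1/a) * ∫ u in Set.Ioi x, 1 / (u ^ (1 + 1/a) * Real.sqrt (1 + u^2))

/-!
Factoring out `u²` and applying the binomial series at `u⁻²` gives
`u ^ p * (1 + u²) ^ r = ∑ₙ (r choose n) u ^ (p + 2r - 2n)` for `u > 1`, and `F` is the case
`p = -(1 + 1/a)`, `r = -1/2`, up to the factor `1/a`. The expansion can be integrated term by term
over `(z, ∞)`: integrating `u ^ e` multiplies its value at `z` by `z / |e + 1|`, a factor that is
bounded because the exponents stay below some `m < -1`, so absolute convergence of the expansion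
at `u = z` alone bounds the sum of the `L¹` norms.
-/

lemma choose_neg_eq_ascPochhammer_eval_div_factorial {K : Type*} [Field K] [CharZero K]
    (r : K) (n : ℕ) :
    Ring.choose (-r) n = (-1) ^ n * (ascPochhammer K n).eval r / (n.factorial : K) := by
  have hfactorial : (n.factorial : K) ≠ 0 := Nat.cast_ne_zero.mpr n.factorial_ne_zero
  have hmultichoose := Ring.factorial_nsmul_multichoose_eq_ascPochhammer r n
  rw [Polynomial.ascPochhammer_smeval_eq_eval, nsmul_eq_mul] at hmultichoose
  have hsign : ((n : ℤ).negOnePow : ℤ) = (-1) ^ n := by simp [Int.negOnePow_def]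
  rw [Ring.choose_neg', ← hmultichoose, eq_div_iff hfactorial, Units.smul_def, zsmul_eq_mul, hsign]
  push_cast
  ring

lemma hasSum_choose_mul_pow (r : ℝ) {x : ℝ} (hx : |x| < 1) :
    HasSum (fun n : ℕ ↦ Ring.choose r n * x ^ n) ((1 + x) ^ r) := by
  have hmem : x ∈ Metric.eball (0 : ℝ) 1 := by
    simpa [enorm_eq_nnnorm, ← NNReal.coe_lt_coe] using hx
  simpa only [binomialSeries, FormalMultilinearSeries.ofScalars_apply_eq, smul_eq_mul, zero_add]
    using (Real.one_add_rpow_hasFPowerSeriesOnBall_zero (a := r)).hasSum hmem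

lemma rpow_sub_two_mul_natCast {u : ℝ} (hu : 0 < u) (q : ℝ) (n : ℕ) :
    u ^ (q - 2 * n) = u ^ q * ((u ^ 2)⁻¹) ^ n := by
  rw [Real.rpow_sub hu, inv_pow, ← pow_mul, ← Real.rpow_natCast, div_eq_mul_inv]
  push_cast
  rfl

lemma rpow_mul_one_add_sq_rpow {u : ℝ} (hu : 0 < u) (p r : ℝ) :
    u ^ p * (1 + u ^ 2) ^ r = u ^ (p + 2 * r) * (1 + (u ^ 2)⁻¹) ^ r := by
  have hfactor : 1 + u ^ 2 = u ^ 2 * (1 + (u ^ 2)⁻¹) := by field_simp; ring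
  rw [hfactor, Real.mul_rpow (by positivity) (by positivity), ← Real.rpow_natCast_mul hu.le,
    ← mul_assoc, ← Real.rpow_add hu, Nat.cast_ofNat]

lemma hasSum_rpow_mul_one_add_sq_rpow (p r : ℝ) {u : ℝ} (hu : 1 < u) :
    HasSum (fun n : ℕ ↦ Ring.choose r n * u ^ (p + 2 * r - 2 * n)) (u ^ p * (1 + u ^ 2) ^ r) := by
  have hu0 : 0 < u := one_pos.trans hu
  have hx : |(u ^ 2)⁻¹| < 1 := by
    rw [abs_of_pos (by positivity)]
    exact inv_lt_one_of_one_lt₀ (one_lt_pow₀ hu two_ne_zero)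
  rw [rpow_mul_one_add_sq_rpow hu0]
  simpa only [rpow_sub_two_mul_natCast hu0, mul_left_comm] using
    (hasSum_choose_mul_pow r hx).mul_left (u ^ (p + 2 * r))

section TermwiseIntegration

variable {ι : Type*} {c e : ι → ℝ} {m z : ℝ}

lemma integral_Ioi_norm_const_mul_rpow (k : ℝ) {s : ℝ} (hs : s < -1) (hz : 0 < z) :
    ∫ u in Set.Ioi z, ‖k * u ^ s‖ = |k| * (-z ^ (s + 1) / (s + 1)) := by
  rw [← integral_Ioi_rpow_of_lt hs hz, ← integral_const_mul]
  refine setIntegral_congr_fun measurableSet_Ioi fun u hu ↦ ?_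
  have hpow : 0 ≤ u ^ s := Real.rpow_nonneg (hz.trans hu).le s
  simp only [norm_mul, Real.norm_eq_abs, abs_of_nonneg hpow]

lemma neg_rpow_add_one_div_le {s : ℝ} (hs : s ≤ m) (hm : m < -1) (hz : 0 < z) :
    -z ^ (s + 1) / (s + 1) ≤ z / -(m + 1) * z ^ s := by
  rw [Real.rpow_add_one hz.ne', neg_div, ← div_neg, div_mul_eq_mul_div, mul_comm z]
  gcongr
  linarith

lemma summable_integral_Ioi_norm_const_mul_rpow (he : ∀ i, e i ≤ m) (hm : m < -1) (hz : 0 < z)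
    (hsum : Summable fun i ↦ c i * z ^ e i) :
    Summable fun i ↦ ∫ u in Set.Ioi z, ‖c i * u ^ e i‖ := by
  refine Summable.of_nonneg_of_le (fun i ↦ integral_nonneg fun u ↦ norm_nonneg _) (fun i ↦ ?_)
    (hsum.abs.mul_left (z / -(m + 1)))
  calc ∫ u in Set.Ioi z, ‖c i * u ^ e i‖
      = |c i| * (-z ^ (e i + 1) / (e i + 1)) :=
        integral_Ioi_norm_const_mul_rpow (c i) ((he i).trans_lt hm) hz
    _ ≤ |c i| * (z / -(m + 1) * z ^ e i) := by
        gcongr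
        exact neg_rpow_add_one_div_le (he i) hm hz
    _ = z / -(m + 1) * |c i * z ^ e i| := by
        rw [abs_mul, abs_of_pos (Real.rpow_pos_of_pos hz _)]
        ring

lemma hasSum_integral_Ioi_of_hasSum_rpow [Countable ι] {f : ℝ → ℝ} (he : ∀ i, e i ≤ m)
    (hm : m < -1) (hz : 0 < z) (hf : ∀ u, z ≤ u → HasSum (fun i ↦ c i * u ^ e i) (f u)) :
    HasSum (fun i ↦ c i * (-z ^ (e i + 1) / (e i + 1))) (∫ u in Set.Ioi z, f u) := by
  have he' (i : ι) : e i < -1 := (he i).trans_lt hm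
  have hsum := hasSum_integral_of_summable_integral_norm
    (fun i ↦ (integrableOn_Ioi_rpow_of_lt (he' i) hz).const_mul (c i))
    (summable_integral_Ioi_norm_const_mul_rpow he hm hz (hf z le_rfl).summable)
  have hf_integral : ∫ u in Set.Ioi z, ∑' i, c i * u ^ e i = ∫ u in Set.Ioi z, f u :=
    setIntegral_congr_fun measurableSet_Ioi fun u hu ↦ (hf u (le_of_lt hu)).tsum_eq
  simpa only [integral_const_mul, integral_Ioi_rpow_of_lt (he' _) hz, hf_integral] using hsum

end TermwiseIntegration

lemma hasSum_integral_Ioi_rpow_mul_one_add_sq_rpow {p r z : ℝ} (hpr : p + 2 * r < -1)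
    (hz : 1 < z) :
    HasSum (fun n : ℕ ↦ Ring.choose r n *
        (-z ^ (p + 2 * r - 2 * n + 1) / (p + 2 * r - 2 * n + 1)))
      (∫ u in Set.Ioi z, u ^ p * (1 + u ^ 2) ^ r) :=
  hasSum_integral_Ioi_of_hasSum_rpow (fun n ↦ sub_le_self _ (by positivity)) hpr
    (one_pos.trans hz) fun _ hu ↦ hasSum_rpow_mul_one_add_sq_rpow p r (hz.trans_le hu)

lemma FERW_eq_integral_rpow (a : ℝ) {z : ℝ} (hz : 0 ≤ z) :
    FERW a z = 1 / a * ∫ u in Set.Ioi z, u ^ (-(1 + 1 / a)) * (1 + u ^ 2) ^ (-(1 / 2) : ℝ) := by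
  rw [FERW]
  congr 1
  refine setIntegral_congr_fun measurableSet_Ioi fun u hu ↦ ?_
  have hu0 : 0 ≤ u := hz.trans (le_of_lt hu)
  have hbase : 0 ≤ 1 + u ^ 2 := by positivity
  simp only [Real.sqrt_eq_rpow, Real.rpow_neg hu0, Real.rpow_neg hbase, one_div, mul_inv]

lemma hasSum_FERW {a z : ℝ} (ha : a ≠ 0) (ha' : 0 < 1 + 1 / a) (hz : 1 < z) :
    HasSum (fun n : ℕ ↦ z ^ (-(1 + 1 / a)) * ((-1 : ℝ) ^ n * (ascPochhammer ℝ n).eval (1 / 2) /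
        (z ^ (2 * n) * ((1 + a + 2 * a * n) * (Nat.factorial n : ℝ)))))
      (FERW a z) := by
  have hz0 : 0 < z := one_pos.trans hz
  have hpr : -(1 + 1 / a) + 2 * (-(1 / 2)) < -1 := by linarith
  rw [FERW_eq_integral_rpow a hz0.le]
  refine ((hasSum_integral_Ioi_rpow_mul_one_add_sq_rpow hpr hz).mul_left (1 / a)).congr_fun
    fun n ↦ ?_
  have hexp : -(1 + 1 / a) + 2 * (-(1 / 2)) - 2 * (n : ℝ) + 1 = -(1 + 1 / a) - 2 * n := by ring
  have hden : 1 + a + 2 * a * n = -a * (-(1 + 1 / a) - 2 * n) := by field_simp; ring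
  rw [hexp, hden, rpow_sub_two_mul_natCast hz0,
    choose_neg_eq_ascPochhammer_eval_div_factorial, inv_pow, ← pow_mul]
  field_simp

theorem erw_F_series_expansion_general {a z : ℝ} (ha : a ≠ 0) (ha' : 0 < 1 + 1 / a)
    (hz : 1 < z) :
    Summable (fun n : ℕ =>
      |(-1 : ℝ) ^ n * (ascPochhammer ℝ n).eval (1/2) /
        (z ^ (2 * n) * ((1 + a + 2 * a * n) * (Nat.factorial n : ℝ)))|) ∧
    FERW a z = z ^ (-(1 + 1/a)) *
      ∑' n : ℕ, (-1 : ℝ) ^ n * (ascPochhammer ℝ n).eval (1/2) /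
        (z ^ (2 * n) * ((1 + a + 2 * a * n) * (Nat.factorial n : ℝ))) := by
  have hpow : z ^ (-(1 + 1 / a)) ≠ 0 := (Real.rpow_pos_of_pos (one_pos.trans hz) _).ne'
  have hsum := hasSum_FERW ha ha' hz
  exact ⟨((summable_mul_left_iff hpow).mp hsum.summable).abs,
    by rw [← tsum_mul_left, hsum.tsum_eq]⟩

/-- for `z > 1`, the series
`∑ (−1)ⁿ (1/2)ₙ z^{−2n} / ((1+a+2an) n!)` converges absolutely and
`F(z) = z^{−(1+1/a)} ∑ (−1)ⁿ (1/2)ₙ z^{−2n} / ((1+a+2an) n!)`. -/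
theorem erw_F_series_expansion (a : ℝ) (ha : a ∈ Set.Ioo (1/2 : ℝ) 1)
    (z : ℝ) (hz : 1 < z) :
    Summable (fun n : ℕ =>
      |(-1 : ℝ) ^ n * (ascPochhammer ℝ n).eval (1/2) /
        (z ^ (2 * n) * ((1 + a + 2 * a * n) * (Nat.factorial n : ℝ)))|) ∧
    FERW a z = z ^ (-(1 + 1/a)) *
      ∑' n : ℕ, (-1 : ℝ) ^ n * (ascPochhammer ℝ n).eval (1/2) /
        (z ^ (2 * n) * ((1 + a + 2 * a * n) * (Nat.factorial n : ℝ))) := by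
  have ha0 : 0 < a := one_half_pos.trans ha.1
  exact erw_F_series_expansion_general ha0.ne' (by positivity) hz
end

section
/- As y → 0+, the inverse function F⁻¹ admits the expansion F⁻¹(y) = ((a+1) y)^{−a/(a+1)} · (1 − c₁ y^{2a/(a+1)} + o(y^{2a/(a+1)})), where c₁ = a (a+1)^{2a/(a+1)} / (2(3a+1)); in particular lim_{y→0+} (a+1)^{a/(a+1)} y^{a/(a+1)} F⁻¹(y) = 1. -/
open MeasureTheory Filter

open scoped Topology

/-!
With `r = 1 + 1/a`, expanding `1/√(1 + u⁻²)` to second order under the integral sign gives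
`(a+1) F(x) x^r = 1 - k x⁻² + O(x⁻⁴)` as `x → ∞`, where `k = r/(2(r+2))`. Now `F⁻¹(y) → ∞` as
`y → 0+`, because `F` is positive and decreasing, so `x = F⁻¹(y)` may be substituted:
`G = (a+1) y x^r` satisfies `(G - 1) x² → -k`. For `s = 1/r = a/(a+1)` one has
`G^s = ((a+1)y)^s x`, and the derivative `s` of `z ↦ z^s` at `1` gives `(G^s - 1) x² → -s k`.
Finally `x²` is traded for `y^{-2s}` by means of `G^{2s} = ((a+1)y)^{2s} x² → 1`.
-/

section Limits

theorem tendsto_atTop_of_antitoneOn_rightInvOn {α β : Type*} [LinearOrder α] [NoMaxOrder α]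
    [LinearOrder β] [TopologicalSpace β] [OrderTopology β] {F : α → β} {g : β → α} {a : α} {b : β}
    (hanti : AntitoneOn F (Set.Ioi a)) (hF : Set.MapsTo F (Set.Ioi a) (Set.Ioi b))
    (hg : Set.MapsTo g (Set.Ioi b) (Set.Ioi a)) (hFg : Set.RightInvOn g F (Set.Ioi b)) :
    Tendsto g (𝓝[>] b) atTop := by
  refine tendsto_atTop.2 fun M => ?_
  obtain ⟨x₀, hx₀⟩ := exists_gt a
  have hM : max M x₀ ∈ Set.Ioi a := hx₀.trans_le (le_max_right _ _)
  filter_upwards [Ioo_mem_nhdsGT (hF hM)] with y ⟨hby, hy⟩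
  by_contra! hlt
  have hle : F (max M x₀) ≤ F (g y) := hanti (hg hby) hM (hlt.le.trans (le_max_left _ _))
  rw [hFg hby] at hle
  exact hle.not_gt hy

variable {ι : Type*} {l : Filter ι}

theorem tendsto_of_tendsto_sub_mul_atTop {G c : ι → ℝ} {L κ : ℝ} (hc : Tendsto c l atTop)
    (h : Tendsto (fun i => (G i - L) * c i) l (𝓝 κ)) : Tendsto G l (𝓝 L) := by
  have hsub : Tendsto (fun i => G i - L) l (𝓝 0) := by
    refine (h.div_atTop hc).congr' ?_
    filter_upwards [hc.eventually_ne_atTop 0] with i hi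
    exact mul_div_cancel_right₀ _ hi
  simpa using hsub.add_const L

theorem tendsto_sub_mul_of_hasDerivAt {𝕜 : Type*} [NontriviallyNormedField 𝕜] {f : 𝕜 → 𝕜}
    {f' L κ : 𝕜} {G c : ι → 𝕜} (hf : HasDerivAt f f' L) (hG : Tendsto G l (𝓝 L))
    (h : Tendsto (fun i => (G i - L) * c i) l (𝓝 κ)) :
    Tendsto (fun i => (f (G i) - f L) * c i) l (𝓝 (f' * κ)) := by
  have hlim := hf.hasFDerivAt.hasFDerivWithinAt (s := Set.univ) |>.lim (c := c)
    (d := fun i => G i - L) (by simpa using hG.sub_const L) (by simp)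
    (by simpa only [smul_eq_mul, mul_comm] using h)
  simpa [mul_comm] using hlim

end Limits

section PowerInversion

variable {g : ℝ → ℝ} {A q s : ℝ}

theorem mul_rpow_rpow_of_mul_eq_one {c x : ℝ} (hc : 0 ≤ c) (hx : 0 ≤ x) (hqs : q * s = 1) (t : ℝ) :
    (c * x ^ q) ^ (t * s) = c ^ (t * s) * x ^ t := by
  rw [Real.mul_rpow hc (Real.rpow_nonneg hx q), ← Real.rpow_mul hx, mul_left_comm, hqs, mul_one]

theorem tendsto_rpow_mul_of_tendsto_mul_rpow (hA : 0 ≤ A) (hqs : q * s = 1)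
    (hg : ∀ᶠ y in 𝓝[>] 0, 0 ≤ g y)
    (h : Tendsto (fun y => A * y * g y ^ q) (𝓝[>] 0) (𝓝 1)) :
    Tendsto (fun y => (A * y) ^ s * g y) (𝓝[>] 0) (𝓝 1) := by
  have hpow : Tendsto (fun y => (A * y * g y ^ q) ^ s) (𝓝[>] 0) (𝓝 1) := by
    simpa using h.rpow_const (p := s) (.inl one_ne_zero)
  refine hpow.congr' ?_
  filter_upwards [hg, self_mem_nhdsWithin] with y hgy hy
  simpa using mul_rpow_rpow_of_mul_eq_one (mul_nonneg hA (le_of_lt hy)) hgy hqs 1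

theorem tendsto_div_rpow_sub_one_div_rpow {r κ : ℝ} (hA : 0 < A) (hqs : q * s = 1) (hr : 0 < r)
    (hg : Tendsto g (𝓝[>] 0) atTop)
    (h : Tendsto (fun y => (A * y * g y ^ q - 1) * g y ^ r) (𝓝[>] 0) (𝓝 κ)) :
    Tendsto (fun y => (g y / (A * y) ^ (-s) - 1) / y ^ (r * s)) (𝓝[>] 0)
      (𝓝 (s * κ * A ^ (r * s))) := by
  have hG : Tendsto (fun y => A * y * g y ^ q) (𝓝[>] 0) (𝓝 1) :=
    tendsto_of_tendsto_sub_mul_atTop ((tendsto_rpow_atTop hr).comp hg) h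
  have hGrs : Tendsto (fun y => (A * y * g y ^ q) ^ (r * s)) (𝓝[>] 0) (𝓝 1) := by
    simpa using hG.rpow_const (p := r * s) (.inl one_ne_zero)
  have hderiv : HasDerivAt (fun z : ℝ => z ^ s) s 1 := by
    simpa using Real.hasDerivAt_rpow_const (x := 1) (p := s) (.inl one_ne_zero)
  have hlim := ((tendsto_sub_mul_of_hasDerivAt hderiv hG h).mul_const (A ^ (r * s))).div hGrs
    one_ne_zero
  rw [div_one] at hlim
  refine hlim.congr' ?_
  filter_upwards [hg.eventually_gt_atTop 0, self_mem_nhdsWithin] with y hgy (hy : 0 < y)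
  have hAy : 0 < A * y := mul_pos hA hy
  have hGs : (A * y * g y ^ q) ^ s = (A * y) ^ s * g y := by
    simpa using mul_rpow_rpow_of_mul_eq_one hAy.le hgy.le hqs 1
  simp only [Pi.div_apply, Real.one_rpow]
  rw [hGs, mul_rpow_rpow_of_mul_eq_one hAy.le hgy.le hqs r, Real.rpow_neg hAy.le, div_inv_eq_mul,
    Real.mul_rpow hA.le hy.le (z := r * s)]
  field_simp

end PowerInversion

section TaylorBounds

theorem one_sub_half_le_inv_sqrt_one_add {v : ℝ} (hv : -1 < v) : 1 - v / 2 ≤ (√(1 + v))⁻¹ := by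
  have hq : 0 < √(1 + v) := Real.sqrt_pos.2 (by linarith)
  have hvq : v = √(1 + v) ^ 2 - 1 := by rw [Real.sq_sqrt (by linarith)]; ring
  generalize √(1 + v) = q at hq hvq
  rw [← one_div, le_div_iff₀ hq, hvq]
  linarith [show 0 ≤ (q - 1) ^ 2 * (q + 2) by positivity]

theorem inv_sqrt_one_add_le {v : ℝ} (hv : 0 ≤ v) :
    (√(1 + v))⁻¹ ≤ 1 - v / 2 + 3 / 8 * v ^ 2 := by
  have hq : 1 ≤ √(1 + v) := Real.one_le_sqrt.2 (by linarith)
  have hvq : v = √(1 + v) ^ 2 - 1 := by rw [Real.sq_sqrt (by linarith)]; ring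
  generalize √(1 + v) = q at hq hvq
  rw [inv_le_iff_one_le_mul₀ (by linarith), hvq]
  linarith [mul_nonneg (pow_nonneg (sub_nonneg.2 hq) 3) (by positivity : 0 ≤ 3 * q ^ 2 + 9 * q + 8)]

variable {r u : ℝ}

theorem one_div_rpow_mul_sqrt (hu : 0 < u) :
    1 / (u ^ r * √(1 + u ^ 2)) = u ^ (-(r + 1)) * (√(1 + (u ^ 2)⁻¹))⁻¹ := by
  have hsqrt : √(1 + u ^ 2) = u * √(1 + (u ^ 2)⁻¹) := by
    rw [← Real.sqrt_sq hu.le, ← Real.sqrt_mul (sq_nonneg u), Real.sqrt_sq hu.le]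
    congr 1
    field_simp
    ring
  rw [hsqrt, Real.rpow_neg hu.le, Real.rpow_add_one hu.ne', one_div, ← mul_inv, mul_assoc]

theorem rpow_neg_add_ofNat (hu : 0 < u) (n : ℕ) [n.AtLeastTwo] :
    u ^ (-(r + ofNat(n))) = u ^ (-r) * (u ^ (ofNat(n) : ℕ))⁻¹ := by
  rw [neg_add, Real.rpow_add hu, Real.rpow_neg hu.le ofNat(n), Real.rpow_ofNat]

theorem rpow_sub_le_one_div_rpow_mul_sqrt (hu : 0 < u) :
    u ^ (-(r + 1)) - 1 / 2 * u ^ (-(r + 1 + 2)) ≤ 1 / (u ^ r * √(1 + u ^ 2)) := by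
  have hv : 0 < (u ^ 2)⁻¹ := by positivity
  calc u ^ (-(r + 1)) - 1 / 2 * u ^ (-(r + 1 + 2))
      = u ^ (-(r + 1)) * (1 - (u ^ 2)⁻¹ / 2) := by
        rw [rpow_neg_add_ofNat hu]; ring
    _ ≤ u ^ (-(r + 1)) * (√(1 + (u ^ 2)⁻¹))⁻¹ := by
        gcongr
        exact one_sub_half_le_inv_sqrt_one_add (by linarith)
    _ = 1 / (u ^ r * √(1 + u ^ 2)) := (one_div_rpow_mul_sqrt hu).symm

theorem one_div_rpow_mul_sqrt_le (hu : 0 < u) :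
    1 / (u ^ r * √(1 + u ^ 2)) ≤
      u ^ (-(r + 1)) - 1 / 2 * u ^ (-(r + 1 + 2)) + 3 / 8 * u ^ (-(r + 1 + 4)) := by
  calc 1 / (u ^ r * √(1 + u ^ 2))
      = u ^ (-(r + 1)) * (√(1 + (u ^ 2)⁻¹))⁻¹ := one_div_rpow_mul_sqrt hu
    _ ≤ u ^ (-(r + 1)) * (1 - (u ^ 2)⁻¹ / 2 + 3 / 8 * (u ^ 2)⁻¹ ^ 2) := by
        gcongr
        exact inv_sqrt_one_add_le (by positivity)
    _ = u ^ (-(r + 1)) - 1 / 2 * u ^ (-(r + 1 + 2)) + 3 / 8 * u ^ (-(r + 1 + 4)) := by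
        rw [rpow_neg_add_ofNat hu, rpow_neg_add_ofNat hu]; ring

end TaylorBounds

/-- The tail integral `∫_x^∞ du / (u^r √(1+u²))`, so that `F` is `(1/a)` times the tail with
exponent `r = 1 + 1/a`. -/
noncomputable def rpowSqrtTail (r x : ℝ) : ℝ :=
  ∫ u in Set.Ioi x, 1 / (u ^ r * √(1 + u ^ 2))

section Tail

variable {r x : ℝ}

theorem integrableOn_Ioi_rpow_neg_add_one (hr : 0 < r) (hx : 0 < x) :
    IntegrableOn (fun u : ℝ => u ^ (-(r + 1))) (Set.Ioi x) :=
  integrableOn_Ioi_rpow_of_lt (by linarith) hx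

theorem integral_Ioi_rpow_neg_add_one (hr : 0 < r) (hx : 0 < x) :
    ∫ u in Set.Ioi x, u ^ (-(r + 1)) = x ^ (-r) / r := by
  rw [integral_Ioi_rpow_of_lt (by linarith) hx, show -(r + 1) + 1 = -r by ring, neg_div_neg_eq]

theorem integrableOn_one_div_rpow_mul_sqrt (hr : 0 < r) (hx : 0 < x) :
    IntegrableOn (fun u : ℝ => 1 / (u ^ r * √(1 + u ^ 2))) (Set.Ioi x) := by
  refine (integrableOn_Ioi_rpow_neg_add_one hr hx).mono'
    (Measurable.aestronglyMeasurable (by fun_prop)) ?_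
  filter_upwards [ae_restrict_mem measurableSet_Ioi] with u hu
  have hu0 : 0 < u := hx.trans hu
  rw [Real.norm_of_nonneg (by positivity), one_div_rpow_mul_sqrt hu0]
  refine mul_le_of_le_one_right (by positivity) (inv_le_one_of_one_le₀ ?_)
  exact Real.one_le_sqrt.2 (le_add_of_nonneg_right (by positivity))

theorem rpowSqrtTail_pos (hr : 0 < r) (hx : 0 < x) : 0 < rpowSqrtTail r x := by
  have hpos : ∀ u ∈ Set.Ioi x, 0 < 1 / (u ^ r * √(1 + u ^ 2)) := fun u hu => by
    have hu0 : 0 < u := hx.trans hu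
    positivity
  have hsupp : Set.Ioi x ⊆ Function.support fun u : ℝ => 1 / (u ^ r * √(1 + u ^ 2)) :=
    fun u hu => (hpos u hu).ne'
  rw [rpowSqrtTail, setIntegral_pos_iff_support_of_nonneg_ae
    (ae_restrict_of_forall_mem measurableSet_Ioi fun u hu => (hpos u hu).le)
    (integrableOn_one_div_rpow_mul_sqrt hr hx), Set.inter_eq_right.2 hsupp, Real.volume_Ioi]
  exact ENNReal.zero_lt_top

theorem antitoneOn_rpowSqrtTail (hr : 0 < r) : AntitoneOn (rpowSqrtTail r) (Set.Ioi 0) := by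
  intro x (hx : 0 < x) x' _ hxx'
  refine setIntegral_mono_set (integrableOn_one_div_rpow_mul_sqrt hr hx)
    (ae_restrict_of_forall_mem measurableSet_Ioi fun u hu => ?_)
    (Set.Ioi_subset_Ioi hxx').eventuallyLE
  have hu0 : 0 < u := hx.trans hu
  simp only [Pi.zero_apply]
  positivity

theorem rpow_sub_le_rpowSqrtTail (hr : 0 < r) (hx : 0 < x) :
    x ^ (-r) / r - 1 / 2 * (x ^ (-(r + 2)) / (r + 2)) ≤ rpowSqrtTail r x := by
  have h0 := integrableOn_Ioi_rpow_neg_add_one hr hx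
  have h2 := (integrableOn_Ioi_rpow_neg_add_one (r := r + 2) (by linarith) hx).const_mul (1 / 2)
  rw [← integral_Ioi_rpow_neg_add_one hr hx,
    ← integral_Ioi_rpow_neg_add_one (r := r + 2) (by linarith) hx, ← integral_const_mul,
    ← integral_sub h0 h2]
  refine setIntegral_mono_on (h0.sub h2) (integrableOn_one_div_rpow_mul_sqrt hr hx)
    measurableSet_Ioi fun u hu => ?_
  rw [add_right_comm r 2 1]
  exact rpow_sub_le_one_div_rpow_mul_sqrt (hx.trans hu)

theorem rpowSqrtTail_le (hr : 0 < r) (hx : 0 < x) :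
    rpowSqrtTail r x ≤ x ^ (-r) / r - 1 / 2 * (x ^ (-(r + 2)) / (r + 2)) +
      3 / 8 * (x ^ (-(r + 4)) / (r + 4)) := by
  have h0 := integrableOn_Ioi_rpow_neg_add_one hr hx
  have h2 := (integrableOn_Ioi_rpow_neg_add_one (r := r + 2) (by linarith) hx).const_mul (1 / 2)
  have h4 := (integrableOn_Ioi_rpow_neg_add_one (r := r + 4) (by linarith) hx).const_mul (3 / 8)
  have h02 : IntegrableOn (fun u : ℝ => u ^ (-(r + 1)) - 1 / 2 * u ^ (-(r + 2 + 1))) (Set.Ioi x) :=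
    h0.sub h2
  rw [← integral_Ioi_rpow_neg_add_one hr hx,
    ← integral_Ioi_rpow_neg_add_one (r := r + 2) (by linarith) hx,
    ← integral_Ioi_rpow_neg_add_one (r := r + 4) (by linarith) hx, ← integral_const_mul,
    ← integral_const_mul, ← integral_sub h0 h2, ← integral_add h02 h4]
  refine setIntegral_mono_on (integrableOn_one_div_rpow_mul_sqrt hr hx) (h02.add h4)
    measurableSet_Ioi fun u hu => ?_
  rw [add_right_comm r 2 1, add_right_comm r 4 1]
  exact one_div_rpow_mul_sqrt_le (hx.trans hu)

theorem neg_le_rpowSqrtTail_expansion (hr : 0 < r) (hx : 0 < x) :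
    -(r / (2 * (r + 2))) ≤ (r * rpowSqrtTail r x * x ^ r - 1) * x ^ 2 := by
  calc -(r / (2 * (r + 2)))
      = (r * (x ^ (-r) / r - 1 / 2 * (x ^ (-(r + 2)) / (r + 2))) * x ^ r - 1) * x ^ 2 := by
        rw [rpow_neg_add_ofNat hx, Real.rpow_neg hx.le]
        field_simp
        ring
    _ ≤ (r * rpowSqrtTail r x * x ^ r - 1) * x ^ 2 := by
        gcongr
        exact rpow_sub_le_rpowSqrtTail hr hx

theorem rpowSqrtTail_expansion_le (hr : 0 < r) (hx : 0 < x) :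
    (r * rpowSqrtTail r x * x ^ r - 1) * x ^ 2 ≤
      -(r / (2 * (r + 2))) + 3 * r / (8 * (r + 4)) / x ^ 2 := by
  calc (r * rpowSqrtTail r x * x ^ r - 1) * x ^ 2
      ≤ (r * (x ^ (-r) / r - 1 / 2 * (x ^ (-(r + 2)) / (r + 2)) +
          3 / 8 * (x ^ (-(r + 4)) / (r + 4))) * x ^ r - 1) * x ^ 2 := by
        gcongr
        exact rpowSqrtTail_le hr hx
    _ = -(r / (2 * (r + 2))) + 3 * r / (8 * (r + 4)) / x ^ 2 := by
        rw [rpow_neg_add_ofNat hx, rpow_neg_add_ofNat hx, Real.rpow_neg hx.le]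
        field_simp
        ring

theorem tendsto_rpowSqrtTail_expansion (hr : 0 < r) :
    Tendsto (fun x => (r * rpowSqrtTail r x * x ^ r - 1) * x ^ 2) atTop
      (𝓝 (-(r / (2 * (r + 2))))) := by
  have hupper : Tendsto (fun x : ℝ => -(r / (2 * (r + 2))) + 3 * r / (8 * (r + 4)) / x ^ 2) atTop
      (𝓝 (-(r / (2 * (r + 2))))) := by
    simpa using (tendsto_const_nhds.div_atTop (tendsto_pow_atTop two_ne_zero)).const_add
      (-(r / (2 * (r + 2))))
  refine tendsto_of_tendsto_of_tendsto_of_le_of_le' tendsto_const_nhds hupper ?_ ?_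
  · exact (eventually_gt_atTop 0).mono fun x hx => neg_le_rpowSqrtTail_expansion hr hx
  · exact (eventually_gt_atTop 0).mono fun x hx => rpowSqrtTail_expansion_le hr hx

end Tail

section FERW

variable {a : ℝ}

theorem FERW_eq_mul_rpowSqrtTail (a x : ℝ) : FERW a x = 1 / a * rpowSqrtTail (1 + 1 / a) x := rfl

theorem FERW_pos (ha : 0 < a) {x : ℝ} (hx : 0 < x) : 0 < FERW a x :=
  mul_pos (by positivity) (rpowSqrtTail_pos (by positivity) hx)

theorem antitoneOn_FERW (ha : 0 < a) : AntitoneOn (FERW a) (Set.Ioi 0) :=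
  fun _ hx _ hx' hle => mul_le_mul_of_nonneg_left
    (antitoneOn_rpowSqrtTail (by positivity) hx hx' hle) (by positivity)

theorem tendsto_FERW_expansion (ha : 0 < a) :
    Tendsto (fun x => ((a + 1) * FERW a x * x ^ (1 + 1 / a) - 1) * x ^ (2 : ℝ)) atTop
      (𝓝 (-((a + 1) / (2 * (3 * a + 1))))) := by
  have hconst : (1 + 1 / a) / (2 * (1 + 1 / a + 2)) = (a + 1) / (2 * (3 * a + 1)) := by
    field_simp
    ring
  rw [← hconst]
  refine (tendsto_rpowSqrtTail_expansion (by positivity)).congr fun x => ?_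
  rw [FERW_eq_mul_rpowSqrtTail, Real.rpow_two, ← mul_assoc,
    show (a + 1) * (1 / a) = 1 + 1 / a by field_simp]

end FERW

theorem erw_Finv_expansion_general (a : ℝ) (ha : 0 < a) (Finv : ℝ → ℝ)
    (hFinv : ∀ y : ℝ, 0 < y → 0 < Finv y ∧ FERW a (Finv y) = y) :
    Tendsto (fun y : ℝ => (Finv y / ((a + 1) * y) ^ (-(a / (a + 1))) - 1) / y ^ (2 * a / (a + 1)))
      (𝓝[>] 0) (𝓝 (-(a * (a + 1) ^ (2 * a / (a + 1)) / (2 * (3 * a + 1))))) ∧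
    Tendsto (fun y : ℝ => (a + 1) ^ (a / (a + 1)) * y ^ (a / (a + 1)) * Finv y) (𝓝[>] 0) (𝓝 1) := by
  have hexp : (1 + 1 / a) * (a / (a + 1)) = 1 := by field_simp
  have htop : Tendsto Finv (𝓝[>] 0) atTop :=
    tendsto_atTop_of_antitoneOn_rightInvOn (antitoneOn_FERW ha) (fun _ hx => FERW_pos ha hx)
      (fun y hy => (hFinv y hy).1) (fun y hy => (hFinv y hy).2)
  have hG : Tendsto (fun y => ((a + 1) * y * Finv y ^ (1 + 1 / a) - 1) * Finv y ^ (2 : ℝ)) (𝓝[>] 0)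
      (𝓝 (-((a + 1) / (2 * (3 * a + 1))))) := by
    refine ((tendsto_FERW_expansion ha).comp htop).congr' ?_
    filter_upwards [self_mem_nhdsWithin] with y hy
    simp only [Function.comp_apply, (hFinv y hy).2]
  constructor
  · convert! tendsto_div_rpow_sub_one_div_rpow (by positivity) hexp two_pos htop hG using 2
    · rw [mul_div_assoc]
    · rw [mul_div_assoc]
      field_simp
  · have hG_one := tendsto_of_tendsto_sub_mul_atTop ((tendsto_rpow_atTop two_pos).comp htop) hG
    refine (tendsto_rpow_mul_of_tendsto_mul_rpow (by positivity) hexp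
      (htop.eventually_ge_atTop 0) hG_one).congr' ?_
    filter_upwards [self_mem_nhdsWithin] with y hy
    rw [Real.mul_rpow (by positivity) (le_of_lt hy)]

/-- as `y → 0+`,
`F⁻¹(y) = ((a+1)y)^{−a/(a+1)} (1 − c₁ y^{2a/(a+1)} + o(y^{2a/(a+1)}))` with
`c₁ = a (a+1)^{2a/(a+1)} / (2(3a+1))`; in particular
`(a+1)^{a/(a+1)} y^{a/(a+1)} F⁻¹(y) → 1`. -/
theorem erw_Finv_expansion (a : ℝ) (ha : a ∈ Set.Ioo (1/2 : ℝ) 1)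
    (Finv : ℝ → ℝ)
    (hFinv : ∀ y : ℝ, 0 < y → 0 < Finv y ∧ FERW a (Finv y) = y)
    (hFinv' : ∀ x : ℝ, 0 < x → Finv (FERW a x) = x) :
    Tendsto (fun y : ℝ =>
        (Finv y / ((a + 1) * y) ^ (-(a/(a+1))) - 1) / y ^ (2*a/(a+1)))
      (nhdsWithin 0 (Set.Ioi 0))
      (nhds (-(a * (a + 1) ^ (2*a/(a+1)) / (2 * (3 * a + 1))))) ∧
    Tendsto (fun y : ℝ => (a + 1) ^ (a/(a+1)) * y ^ (a/(a+1)) * Finv y)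
      (nhdsWithin 0 (Set.Ioi 0)) (nhds 1) := by
  exact erw_Finv_expansion_general a (by linarith [ha.1]) Finv hFinv
end

section
/- The function a ↦ ρ_a is strictly decreasing on the interval (1/2, 1) and the function a ↦ log ρ_a is convex on (1/2, 1) (so a ↦ ρ_a is convex there); moreover ρ_a → +∞ as a → (1/2)+ and ρ_a → 1 as a → 1−, with the precise asymptotics lim_{a→(1/2)+} √(a − 1/2) · ρ_a = 1/2 and lim_{a→1−} (ρ_a − 1)/(1 − a) = log 2. -/
open Filter

/-!
Write `K s = Γ(1/2 + s/2) Γ(1 - s/2) / √π`, so that `ρ_a = K (1/a) ^ a` and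
`log ρ_a = a log K (1/a)`. The recurrence `log Γ(x) = log Γ(x + 1) - log x` exhibits `log Γ` as the
sum of a convex and a strictly convex function, so `log K` is strictly convex on `(-1, 2)`.

Both shape properties follow. Since `K 0 = 1`, `log ρ_a` is the slope of the secant of `log K` from
`0` to `1/a`, which strictly decreases in `a`; and `a ↦ a log K (1/a)` is the perspective of
`log K`, hence strictly convex. Composing with `exp` gives the convexity of `ρ`.

The classical values of `Γ'` at `1` and `1/2` give `K' 1 = log 2`, whence `ρ' 1 = -log 2`.
At `1/2` the base `K (1/a)` has a simple pole: `(a - 1/2) K (1/a) → 1/4`. As `t ^ t → 1` for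
`t → 0+`, this gives `√(a - 1/2) ρ_a → (1/4) ^ (1/2) = 1/2`.
-/

open Set Topology

section Convexity

variable {𝕜 E F β : Type*} [Field 𝕜]

theorem inv_convexCombo_eq_convexCombo_inv {x y a b : 𝕜} (hx : x ≠ 0) (hy : y ≠ 0)
    (hab : a + b = 1) :
    (a * x + b * y)⁻¹ =
      (a * x / (a * x + b * y)) * x⁻¹ + (b * y / (a * x + b * y)) * y⁻¹ := by
  rw [div_mul_eq_mul_div, div_mul_eq_mul_div, mul_inv_cancel_right₀ hx, mul_inv_cancel_right₀ hy,
    ← add_div, hab, one_div]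

variable [LinearOrder 𝕜]

theorem strictConvexOn_comp_affineMap [AddCommGroup E] [Module 𝕜 E] [AddCommGroup F] [Module 𝕜 F]
    [AddCommMonoid β] [PartialOrder β] [SMul 𝕜 β] {s : Set F} {f : F → β}
    (hf : StrictConvexOn 𝕜 s f) {g : E →ᵃ[𝕜] F} (hg : Function.Injective g) :
    StrictConvexOn 𝕜 (g ⁻¹' s) (f ∘ g) := by
  refine ⟨hf.1.affine_preimage g, fun x hx y hy hxy a b ha hb hab ↦ ?_⟩
  rw [Function.comp_apply, Convex.combo_affine_apply hab]
  exact hf.2 hx hy (hg.ne hxy) ha hb hab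

variable [IsStrictOrderedRing 𝕜]

theorem strictConvexOn_smul_comp_inv [AddCommMonoid β] [PartialOrder β] [Module 𝕜 β]
    [PosSMulStrictMono 𝕜 β] {s : Set 𝕜} {f : 𝕜 → β} (hf : StrictConvexOn 𝕜 s f) :
    StrictConvexOn 𝕜 {x | 0 < x ∧ x⁻¹ ∈ s} (fun x ↦ x • f x⁻¹) := by
  refine ⟨fun x ⟨hx, hxs⟩ y ⟨hy, hys⟩ a b ha hb hab ↦ ?_,
    fun x ⟨hx, hxs⟩ y ⟨hy, hys⟩ hxy a b ha hb hab ↦ ?_⟩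
  · have hpos : 0 < a * x + b * y := convex_Ioi (0 : 𝕜) hx hy ha hb hab
    refine ⟨hpos, ?_⟩
    rw [smul_eq_mul, smul_eq_mul, inv_convexCombo_eq_convexCombo_inv hx.ne' hy.ne' hab]
    exact hf.1 hxs hys (by positivity) (by positivity) (by rw [← add_div, div_self hpos.ne'])
  · have hpos : 0 < a * x + b * y := by positivity
    have hlt := hf.2 hxs hys (inv_injective.ne hxy) (div_pos (mul_pos ha hx) hpos)
      (div_pos (mul_pos hb hy) hpos) (by rw [← add_div, div_self hpos.ne'])
    calc (a • x + b • y) • f (a • x + b • y)⁻¹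
        < (a * x + b * y) • ((a * x / (a * x + b * y)) • f x⁻¹ +
            (b * y / (a * x + b * y)) • f y⁻¹) := by
          simp only [smul_eq_mul] at hlt ⊢
          rw [inv_convexCombo_eq_convexCombo_inv hx.ne' hy.ne' hab]
          exact smul_lt_smul_of_pos_left hlt hpos
      _ = a • x • f x⁻¹ + b • y • f y⁻¹ := by
          simp only [smul_add, smul_smul, mul_div_cancel₀ _ hpos.ne']

end Convexity

theorem strictConvexOn_of_strictConvexOn_log {E : Type*} [AddCommMonoid E] [SMul ℝ E] {s : Set E}
    {f : E → ℝ} (hpos : ∀ x ∈ s, 0 < f x) (hf : StrictConvexOn ℝ s (fun x ↦ Real.log (f x))) :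
    StrictConvexOn ℝ s f := by
  refine ⟨hf.1, fun x hx y hy hxy a b ha hb hab ↦ ?_⟩
  have hmem : a • x + b • y ∈ s := hf.1 hx hy ha.le hb.le hab
  calc f (a • x + b • y)
      = Real.exp (Real.log (f (a • x + b • y))) := (Real.exp_log (hpos _ hmem)).symm
    _ < Real.exp (a • Real.log (f x) + b • Real.log (f y)) :=
        Real.exp_lt_exp.2 (hf.2 hx hy hxy ha hb hab)
    _ ≤ a • Real.exp (Real.log (f x)) + b • Real.exp (Real.log (f y)) :=
        convexOn_exp.2 (mem_univ _) (mem_univ _) ha.le hb.le hab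
    _ = a • f x + b • f y := by rw [Real.exp_log (hpos x hx), Real.exp_log (hpos y hy)]

theorem tendsto_atTop_of_tendsto_mul_of_tendsto_nhdsGT_zero {α 𝕜 : Type*} [Field 𝕜] [LinearOrder 𝕜]
    [IsStrictOrderedRing 𝕜] [TopologicalSpace 𝕜] [OrderTopology 𝕜] {l : Filter α} {f g : α → 𝕜}
    {d : 𝕜} (hd : 0 < d) (hf : Tendsto f l (𝓝[>] 0))
    (hfg : Tendsto (fun x ↦ f x * g x) l (𝓝 d)) : Tendsto g l atTop := by
  refine ((tendsto_inv_nhdsGT_zero.comp hf).atTop_mul_pos hd hfg).congr' ?_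
  filter_upwards [hf.eventually_mem self_mem_nhdsWithin] with x hx
  exact inv_mul_cancel_left₀ (ne_of_gt hx) (g x)

theorem tendsto_rpow_neg_self_nhdsGT_zero :
    Tendsto (fun t : ℝ ↦ t ^ (-t)) (𝓝[>] 0) (𝓝 1) := by
  have hexp : Continuous fun t : ℝ ↦ Real.exp (-(t * Real.log t)) :=
    Real.continuous_exp.comp Real.continuous_mul_log.neg
  have hlim : Tendsto (fun t : ℝ ↦ Real.exp (-(t * Real.log t))) (𝓝[>] 0) (𝓝 1) := by
    simpa using (hexp.tendsto 0).mono_left nhdsWithin_le_nhds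
  refine hlim.congr' ?_
  filter_upwards [self_mem_nhdsWithin] with t ht
  rw [Real.rpow_def_of_pos ht, mul_neg, mul_comm]

theorem tendsto_sub_nhdsGT {G : Type*} [AddGroup G] [Preorder G] [AddRightStrictMono G]
    [TopologicalSpace G] [ContinuousSub G] (c : G) :
    Tendsto (fun x ↦ x - c) (𝓝[>] c) (𝓝[>] 0) := by
  refine tendsto_nhdsWithin_iff.2 ⟨?_, ?_⟩
  · simpa using ((continuous_sub_right c).tendsto c).mono_left nhdsWithin_le_nhds
  · filter_upwards [self_mem_nhdsWithin] with x (hx : c < x) using sub_pos.2 hx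

theorem tendsto_sub_rpow_mul_rpow_of_simple_pole {g : ℝ → ℝ} {c d : ℝ} (hd : 0 < d)
    (hg : Tendsto (fun x ↦ (x - c) * g x) (𝓝[>] c) (𝓝 d)) :
    Tendsto (fun x ↦ (x - c) ^ c * g x ^ x) (𝓝[>] c) (𝓝 (d ^ c)) := by
  have hself := tendsto_rpow_neg_self_nhdsGT_zero.comp (tendsto_sub_nhdsGT c)
  have hpow := hg.rpow (tendsto_id.mono_left nhdsWithin_le_nhds) (.inl hd.ne')
  have hlim := hself.mul hpow
  rw [one_mul] at hlim
  refine hlim.congr' ?_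
  filter_upwards [self_mem_nhdsWithin, hg.eventually_const_lt hd] with x hx hxg
  have hsub : 0 < x - c := sub_pos.2 hx
  calc (x - c) ^ (-(x - c)) * ((x - c) * g x) ^ x
      = (x - c) ^ (-(x - c)) * (x - c) ^ x * g x ^ x := by
        rw [Real.mul_rpow hsub.le (pos_of_mul_pos_right hxg hsub.le).le, mul_assoc]
    _ = (x - c) ^ c * g x ^ x := by rw [← Real.rpow_add hsub]; ring_nf

theorem continuousAt_realGamma_of_pos {x : ℝ} (hx : 0 < x) : ContinuousAt Real.Gamma x :=
  (Real.differentiableOn_Gamma_Ioi.differentiableAt (Ioi_mem_nhds hx)).continuousAt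

theorem tendsto_self_mul_realGamma_nhdsNE_zero :
    Tendsto (fun x : ℝ ↦ x * Real.Gamma x) (𝓝[≠] 0) (𝓝 1) := by
  have hcont : ContinuousAt (fun x : ℝ ↦ Real.Gamma (x + 1)) 0 :=
    ContinuousAt.comp (g := Real.Gamma) (continuousAt_realGamma_of_pos (by norm_num)) (by fun_prop)
  have hlim : Tendsto (fun x : ℝ ↦ Real.Gamma (x + 1)) (𝓝[≠] 0) (𝓝 1) := by
    simpa using hcont.tendsto.mono_left nhdsWithin_le_nhds
  refine hlim.congr' ?_
  filter_upwards [self_mem_nhdsWithin] with x hx using Real.Gamma_add_one hx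

theorem strictConvexOn_log_realGamma :
    StrictConvexOn ℝ (Ioi 0) (Real.log ∘ Real.Gamma) := by
  have hshift : ConvexOn ℝ (Ioi 0) fun x ↦ Real.log (Real.Gamma (x + 1)) :=
    (Real.convexOn_log_Gamma.translate_left 1).subset
      (fun x (hx : 0 < x) ↦ show 0 < 1 + x by linarith) (convex_Ioi 0)
  refine (hshift.add_strictConvexOn strictConcaveOn_log_Ioi.neg).congr fun x (hx : 0 < x) ↦ ?_
  simp only [Pi.add_apply, Pi.neg_apply, Function.comp_apply]
  rw [Real.Gamma_add_one hx.ne', Real.log_mul hx.ne' (Real.Gamma_pos_of_pos hx).ne']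
  ring

theorem strictConvexOn_log_realGamma_affine (p : ℝ) {q : ℝ} (hq : q ≠ 0) :
    StrictConvexOn ℝ {s | 0 < p + q * s} (fun s ↦ Real.log (Real.Gamma (p + q * s))) := by
  have hinj : Function.Injective (AffineMap.lineMap p (p + q) : ℝ →ᵃ[ℝ] ℝ) :=
    AffineMap.lineMap_injective ℝ (by simpa using hq)
  have happly (s : ℝ) : AffineMap.lineMap p (p + q) s = p + q * s := by
    rw [AffineMap.lineMap_apply_ring']
    ring
  simpa only [preimage, mem_Ioi, Function.comp_def, happly] using
    strictConvexOn_comp_affineMap strictConvexOn_log_realGamma hinj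

/-- The function `K` with `ρ_a = K (1/a) ^ a`. In the variable `s = 1/a` the arguments of `Γ` are
affine, so that `log K` inherits convexity from `log Γ`. -/
noncomputable def rhoKernel (s : ℝ) : ℝ :=
  (1 / √Real.pi) * Real.Gamma (1 / 2 + s / 2) * Real.Gamma (1 - s / 2)

theorem rhoERW_eq_rhoKernel_inv_rpow (a : ℝ) : rhoERW a = rhoKernel a⁻¹ ^ a := by
  rw [rhoERW, rhoKernel, show 1 / (2 * a) = a⁻¹ / 2 by ring]

theorem inv_mem_Ioo_zero_two {a : ℝ} (ha : 1 / 2 < a) : a⁻¹ ∈ Ioo 0 2 :=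
  ⟨inv_pos.2 (by linarith), inv_lt_of_inv_lt₀ two_pos (by linarith)⟩

theorem inv_mem_Ioo_neg_one_two {a : ℝ} (ha : 1 / 2 < a) : a⁻¹ ∈ Ioo (-1) 2 :=
  Ioo_subset_Ioo_left (by norm_num) (inv_mem_Ioo_zero_two ha)

theorem rhoKernel_pos {s : ℝ} (hs : s ∈ Ioo (-1) 2) : 0 < rhoKernel s := by
  have hleft : 0 < Real.Gamma (1 / 2 + s / 2) := Real.Gamma_pos_of_pos (by linarith [hs.1])
  have hright : 0 < Real.Gamma (1 - s / 2) := Real.Gamma_pos_of_pos (by linarith [hs.2])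
  unfold rhoKernel
  positivity

theorem rhoKernel_zero : rhoKernel 0 = 1 := by
  rw [rhoKernel, zero_div, add_zero, sub_zero, Real.Gamma_one, Real.Gamma_one_half_eq, mul_one,
    one_div_mul_cancel (by positivity)]

theorem rhoKernel_one : rhoKernel 1 = 1 := by
  rw [rhoKernel, add_halves, sub_half, Real.Gamma_one, Real.Gamma_one_half_eq, mul_one,
    one_div_mul_cancel (by positivity)]

theorem strictConvexOn_log_rhoKernel :
    StrictConvexOn ℝ (Ioo (-1) 2) (fun s ↦ Real.log (rhoKernel s)) := by
  have hleft : StrictConvexOn ℝ (Ioo (-1) 2) fun s : ℝ ↦ Real.log (Real.Gamma (1 / 2 + s / 2)) := by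
    convert (strictConvexOn_log_realGamma_affine (1 / 2) one_half_pos.ne').subset ?_
      (convex_Ioo (-1) 2) using 5
    · ring
    · exact fun s hs ↦ show 0 < 1 / 2 + 1 / 2 * s by linarith [hs.1]
  have hright : StrictConvexOn ℝ (Ioo (-1) 2) fun s : ℝ ↦ Real.log (Real.Gamma (1 - s / 2)) := by
    convert (strictConvexOn_log_realGamma_affine 1 (neg_ne_zero.2 one_half_pos.ne')).subset ?_
      (convex_Ioo (-1) 2) using 5
    · ring
    · exact fun s hs ↦ show 0 < 1 + -(1 / 2) * s by linarith [hs.2]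
  refine ((hleft.add hright).add_const (Real.log (1 / √Real.pi))).congr fun s hs ↦ ?_
  have hΓleft : Real.Gamma (1 / 2 + s / 2) ≠ 0 := (Real.Gamma_pos_of_pos (by linarith [hs.1])).ne'
  have hΓright : Real.Gamma (1 - s / 2) ≠ 0 := (Real.Gamma_pos_of_pos (by linarith [hs.2])).ne'
  have hpi : 1 / √Real.pi ≠ 0 := by positivity
  simp only [Pi.add_apply]
  rw [rhoKernel, Real.log_mul (mul_ne_zero hpi hΓleft) hΓright, Real.log_mul hpi hΓleft]
  ring

theorem hasDerivAt_rhoKernel_one : HasDerivAt rhoKernel (Real.log 2) 1 := by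
  have hhalf : HasDerivAt (fun s : ℝ ↦ s / 2) (1 / 2) 1 := (hasDerivAt_id 1).div_const 2
  have hleft : HasDerivAt (fun s : ℝ ↦ Real.Gamma (1 / 2 + s / 2))
      (-Real.eulerMascheroniConstant * (1 / 2)) 1 :=
    HasDerivAt.comp (h₂ := Real.Gamma) 1 (by rw [add_halves]; exact Real.hasDerivAt_Gamma_one)
      (hhalf.const_add _)
  have hright : HasDerivAt (fun s : ℝ ↦ Real.Gamma (1 - s / 2))
      (-√Real.pi * (Real.eulerMascheroniConstant + 2 * Real.log 2) * -(1 / 2)) 1 :=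
    HasDerivAt.comp (h₂ := Real.Gamma) 1 (by rw [sub_half]; exact Real.hasDerivAt_Gamma_one_half)
      (hhalf.const_sub _)
  refine ((hleft.const_mul (1 / √Real.pi)).mul hright).congr_deriv ?_
  rw [add_halves, sub_half, Real.Gamma_one, Real.Gamma_one_half_eq]
  have hpi : √Real.pi ≠ 0 := by positivity
  field_simp
  ring

theorem tendsto_sub_half_mul_rhoKernel_inv :
    Tendsto (fun a ↦ (a - 1 / 2) * rhoKernel a⁻¹) (𝓝[>] (1 / 2)) (𝓝 (1 / 4)) := by
  have hpole : Tendsto (fun a : ℝ ↦ (1 - a⁻¹ / 2) * Real.Gamma (1 - a⁻¹ / 2))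
      (𝓝[>] (1 / 2)) (𝓝 1) := by
    refine tendsto_self_mul_realGamma_nhdsNE_zero.comp (tendsto_nhdsWithin_iff.2 ⟨?_, ?_⟩)
    · have hcont : ContinuousAt (fun a : ℝ ↦ 1 - a⁻¹ / 2) (1 / 2) := by fun_prop (disch := norm_num)
      simpa using hcont.tendsto.mono_left nhdsWithin_le_nhds
    · filter_upwards [self_mem_nhdsWithin] with a (ha : 1 / 2 < a)
      exact ne_of_gt (show 0 < 1 - a⁻¹ / 2 by linarith [(inv_mem_Ioo_zero_two ha).2])
  have hregular : Tendsto (fun a : ℝ ↦ a * (1 / √Real.pi * Real.Gamma (1 / 2 + a⁻¹ / 2)))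
      (𝓝[>] (1 / 2)) (𝓝 (1 / 4)) := by
    have hΓ : ContinuousAt (fun a : ℝ ↦ Real.Gamma (1 / 2 + a⁻¹ / 2)) (1 / 2) :=
      ContinuousAt.comp (g := Real.Gamma) (continuousAt_realGamma_of_pos (by norm_num))
        (by fun_prop (disch := norm_num))
    have hvalue : 1 / 2 * (1 / √Real.pi * Real.Gamma (1 / 2 + (1 / 2)⁻¹ / 2)) = 1 / 4 := by
      rw [show (1 / 2 + (1 / 2)⁻¹ / 2 : ℝ) = 1 / 2 + 1 by norm_num,
        Real.Gamma_add_one (by norm_num), Real.Gamma_one_half_eq]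
      field_simp
      norm_num
    rw [← hvalue]
    exact (continuousAt_id.mul (hΓ.const_mul _)).tendsto.mono_left nhdsWithin_le_nhds
  have hlim := hregular.mul hpole
  rw [mul_one] at hlim
  refine hlim.congr' ?_
  filter_upwards [self_mem_nhdsWithin] with a (ha : 1 / 2 < a)
  have ha₀ : a ≠ 0 := by linarith
  rw [rhoKernel, show a - 1 / 2 = a * (1 - a⁻¹ / 2) by field_simp]
  ring

theorem rhoERW_pos {a : ℝ} (ha : 1 / 2 < a) : 0 < rhoERW a := by
  rw [rhoERW_eq_rhoKernel_inv_rpow]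
  exact Real.rpow_pos_of_pos (rhoKernel_pos (inv_mem_Ioo_neg_one_two ha)) a

theorem rhoERW_one : rhoERW 1 = 1 := by
  rw [rhoERW_eq_rhoKernel_inv_rpow, inv_one, rhoKernel_one, Real.rpow_one]

theorem log_rhoERW {a : ℝ} (ha : 1 / 2 < a) :
    Real.log (rhoERW a) = a * Real.log (rhoKernel a⁻¹) := by
  rw [rhoERW_eq_rhoKernel_inv_rpow, Real.log_rpow (rhoKernel_pos (inv_mem_Ioo_neg_one_two ha))]

theorem log_rhoERW_eq_secant_log_rhoKernel {a : ℝ} (ha : 1 / 2 < a) :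
    Real.log (rhoERW a) =
      (Real.log (rhoKernel a⁻¹) - Real.log (rhoKernel 0)) / (a⁻¹ - 0) := by
  rw [log_rhoERW ha, rhoKernel_zero, Real.log_one, sub_zero, sub_zero, div_inv_eq_mul, mul_comm]

theorem strictAntiOn_rhoERW : StrictAntiOn rhoERW (Ioi (1 / 2)) := by
  intro a (ha : 1 / 2 < a) b (hb : 1 / 2 < b) hab
  have hinv : b⁻¹ < a⁻¹ := inv_strictAnti₀ (by linarith) hab
  rw [← Real.log_lt_log_iff (rhoERW_pos hb) (rhoERW_pos ha),
    log_rhoERW_eq_secant_log_rhoKernel ha, log_rhoERW_eq_secant_log_rhoKernel hb]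
  exact strictConvexOn_log_rhoKernel.secant_strict_mono (by norm_num)
    (inv_mem_Ioo_neg_one_two hb) (inv_mem_Ioo_neg_one_two ha)
    (inv_mem_Ioo_zero_two hb).1.ne' (inv_mem_Ioo_zero_two ha).1.ne' hinv

theorem strictConvexOn_log_rhoERW :
    StrictConvexOn ℝ (Ioi (1 / 2)) (fun a ↦ Real.log (rhoERW a)) :=
  ((strictConvexOn_smul_comp_inv strictConvexOn_log_rhoKernel).subset
    (fun _ ha ↦ ⟨one_half_pos.trans ha, inv_mem_Ioo_neg_one_two ha⟩) (convex_Ioi _)).congr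
    fun _ ha ↦ (log_rhoERW ha).symm

theorem strictConvexOn_rhoERW : StrictConvexOn ℝ (Ioi (1 / 2)) rhoERW :=
  strictConvexOn_of_strictConvexOn_log (fun _ ha ↦ rhoERW_pos ha) strictConvexOn_log_rhoERW

theorem hasDerivAt_rhoERW_one : HasDerivAt rhoERW (-Real.log 2) 1 := by
  have hkernel : HasDerivAt (fun a : ℝ ↦ rhoKernel a⁻¹) (Real.log 2 * -1) 1 := by
    refine HasDerivAt.comp (h₂ := rhoKernel) 1 ?_ (by simpa using hasDerivAt_inv (one_ne_zero' ℝ))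
    rw [inv_one]
    exact hasDerivAt_rhoKernel_one
  have hpow := hkernel.rpow (hasDerivAt_id 1) (rhoKernel_pos (by norm_num))
  simp only [inv_one, rhoKernel_one, id_eq, Real.one_rpow, Real.log_one] at hpow
  rw [funext rhoERW_eq_rhoKernel_inv_rpow]
  exact hpow.congr_deriv (by ring)

theorem tendsto_sqrt_sub_half_mul_rhoERW :
    Tendsto (fun a ↦ √(a - 1 / 2) * rhoERW a) (𝓝[>] (1 / 2)) (𝓝 (1 / 2)) := by
  have hlim := tendsto_sub_rpow_mul_rpow_of_simple_pole (by norm_num)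
    tendsto_sub_half_mul_rhoKernel_inv
  have hsqrt : (1 / 4 : ℝ) ^ (1 / 2 : ℝ) = 1 / 2 := by
    rw [← Real.sqrt_eq_rpow, Real.sqrt_eq_iff_mul_self_eq] <;> norm_num
  rw [hsqrt] at hlim
  simpa only [Real.sqrt_eq_rpow, rhoERW_eq_rhoKernel_inv_rpow] using hlim

theorem tendsto_rhoERW_nhdsGT_half : Tendsto rhoERW (𝓝[>] (1 / 2)) atTop := by
  refine tendsto_atTop_of_tendsto_mul_of_tendsto_nhdsGT_zero one_half_pos ?_
    tendsto_sqrt_sub_half_mul_rhoERW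
  refine tendsto_nhdsWithin_iff.2 ⟨?_, ?_⟩
  · have hcont : Continuous fun a : ℝ ↦ √(a - 1 / 2) := by fun_prop
    simpa using (hcont.tendsto (1 / 2)).mono_left nhdsWithin_le_nhds
  · filter_upwards [self_mem_nhdsWithin] with a ha using Real.sqrt_pos.2 (sub_pos.2 ha)

theorem tendsto_rhoERW_nhds_one : Tendsto rhoERW (𝓝 1) (𝓝 1) := by
  simpa only [rhoERW_one] using hasDerivAt_rhoERW_one.continuousAt.tendsto

theorem tendsto_rhoERW_sub_one_div_one_sub :
    Tendsto (fun a ↦ (rhoERW a - 1) / (1 - a)) (𝓝[≠] 1) (𝓝 (Real.log 2)) := by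
  have hslope := hasDerivAt_rhoERW_one.tendsto_slope.neg
  rw [neg_neg] at hslope
  refine hslope.congr fun a ↦ ?_
  rw [slope_def_field, rhoERW_one, ← div_neg, neg_sub]

theorem erw_rho_properties_general :
    StrictAntiOn rhoERW (Ioi (1 / 2)) ∧
    StrictConvexOn ℝ (Ioi (1 / 2)) (fun a ↦ Real.log (rhoERW a)) ∧
    StrictConvexOn ℝ (Ioi (1 / 2)) rhoERW ∧
    Tendsto rhoERW (𝓝[>] (1 / 2)) atTop ∧
    Tendsto rhoERW (𝓝 1) (𝓝 1) ∧
    Tendsto (fun a ↦ √(a - 1 / 2) * rhoERW a) (𝓝[>] (1 / 2)) (𝓝 (1 / 2)) ∧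
    Tendsto (fun a ↦ (rhoERW a - 1) / (1 - a)) (𝓝[≠] 1) (𝓝 (Real.log 2)) :=
  ⟨strictAntiOn_rhoERW, strictConvexOn_log_rhoERW, strictConvexOn_rhoERW,
    tendsto_rhoERW_nhdsGT_half, tendsto_rhoERW_nhds_one, tendsto_sqrt_sub_half_mul_rhoERW,
    tendsto_rhoERW_sub_one_div_one_sub⟩

/-- `a ↦ ρ_a` is strictly decreasing on `(1/2,1)`, log-convex (hence
convex) there, tends to `+∞` at `1/2+` and to `1` at `1−`, with the precise
asymptotics `√(a−1/2) ρ_a → 1/2` and `(ρ_a−1)/(1−a) → log 2`. -/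
theorem erw_rho_properties :
    StrictAntiOn (fun a : ℝ => rhoERW a) (Set.Ioo (1/2 : ℝ) 1) ∧
    ConvexOn ℝ (Set.Ioo (1/2 : ℝ) 1) (fun a : ℝ => Real.log (rhoERW a)) ∧
    ConvexOn ℝ (Set.Ioo (1/2 : ℝ) 1) (fun a : ℝ => rhoERW a) ∧
    Tendsto rhoERW (nhdsWithin (1/2 : ℝ) (Set.Ioi (1/2 : ℝ))) atTop ∧
    Tendsto rhoERW (nhdsWithin (1 : ℝ) (Set.Iio (1 : ℝ))) (nhds 1) ∧
    Tendsto (fun a : ℝ => Real.sqrt (a - 1/2) * rhoERW a)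
      (nhdsWithin (1/2 : ℝ) (Set.Ioi (1/2 : ℝ))) (nhds (1/2)) ∧
    Tendsto (fun a : ℝ => (rhoERW a - 1) / (1 - a))
      (nhdsWithin (1 : ℝ) (Set.Iio (1 : ℝ))) (nhds (Real.log 2)) := by
  obtain ⟨hanti, hlog, hconv, hpole, hone, hsqrt, hslope⟩ := erw_rho_properties_general
  exact ⟨hanti.mono Ioo_subset_Ioi_self,
    hlog.convexOn.subset Ioo_subset_Ioi_self (convex_Ioo _ _),
    hconv.convexOn.subset Ioo_subset_Ioi_self (convex_Ioo _ _), hpole,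
    hone.mono_left nhdsWithin_le_nhds, hsqrt, hslope.mono_left (nhdsLT_le_nhdsNE 1)⟩
end
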